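/- arXiv:2403.13584 — 3 statements merged into one kernel-verified Lean document; each statement's English description precedes it below -/
import Mathlib

section
/- Let ρ and σ be density operators on a finite-dimensional complex Hilbert space with supp(ρ) ⊆ supp(σ) and ρσ ≠ σρ. Then for every α ∈ (1/2, 1) ∪ (1, ∞), the inequality between the measured and sandwiched Rényi divergences is strict: D_α^𝕄(ρ‖σ) < D_α^*(ρ‖σ). -/
open Matrix
open scoped ComplexOrder Kronecker

noncomputable section

/-- Real power of a Hermitian matrix via functional calculus on its support
(Moore–Penrose convention); junk value `0` for non-Hermitian input. -/
def Matrix.rpowH {ι : Type*} [Fintype ι] [DecidableEq ι] (A : Matrix ι ι ℂ) (p : ℝ) :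
    Matrix ι ι ℂ :=
  if hA : A.IsHermitian then
    (hA.eigenvectorUnitary : Matrix ι ι ℂ) *
      Matrix.diagonal (fun i => ((hA.eigenvalues i ^ p : ℝ) : ℂ)) *
      star (hA.eigenvectorUnitary : Matrix ι ι ℂ)
  else 0

/-- Real part of the trace. -/
def retr {ι : Type*} [Fintype ι] (A : Matrix ι ι ℂ) : ℝ :=
  (Matrix.trace A).re

open scoped Classical in
/-- Classical Rényi divergence of order `α` of two (finitely supported) probability
mass functions, with value `+∞` when `α > 1` and absolute continuity fails. -/
def renyiDivE (α : ℝ) {k : ℕ} (p q : Fin k → ℝ) : EReal :=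
  if α < 1 ∨ ∀ i, q i = 0 → p i = 0 then
    (((α - 1)⁻¹ * Real.log (∑ i, p i ^ α * q i ^ (1 - α)) : ℝ) : EReal)
  else (⊤ : EReal)

/-- Measured Rényi divergence: supremum of classical Rényi divergences of the outcome
distributions over all finite POVMs. -/
def measuredRenyiDiv {ι : Type*} [Fintype ι] [DecidableEq ι]
    (α : ℝ) (ρ σ : Matrix ι ι ℂ) : EReal :=
  ⨆ (k : ℕ) (P : Fin k → Matrix ι ι ℂ) (_ : ∀ i, (P i).PosSemidef) (_ : ∑ i, P i = 1),
    renyiDivE α (fun i => retr (ρ * P i)) (fun i => retr (σ * P i))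


/-- Sandwiched Rényi divergence
`D_α^*(ρ‖σ) = (α-1)⁻¹ log Tr[(σ^{(1-α)/(2α)} ρ σ^{(1-α)/(2α)})^α]`. -/
def sandwichedRenyiDiv {ι : Type*} [Fintype ι] [DecidableEq ι]
    (α : ℝ) (ρ σ : Matrix ι ι ℂ) : ℝ :=
  (α - 1)⁻¹ * Real.log (retr (Matrix.rpowH
    (Matrix.rpowH σ ((1 - α) / (2 * α)) * ρ * Matrix.rpowH σ ((1 - α) / (2 * α))) α))

set_option linter.unusedSectionVars false

/-! ### Nice functions: entire functions bounded on the strip -/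

def NiceFn (f : ℂ → ℂ) : Prop :=
  Differentiable ℂ f ∧ ∃ C : ℝ, ∀ z : ℂ, 0 ≤ z.re → z.re ≤ 1 → ‖f z‖ ≤ C

theorem NiceFn.const (c : ℂ) : NiceFn (fun _ => c) :=
  ⟨differentiable_const c, ‖c‖, fun _ _ _ => le_rfl⟩

theorem NiceFn.add {f g : ℂ → ℂ} (hf : NiceFn f) (hg : NiceFn g) :
    NiceFn (fun z => f z + g z) := by
  obtain ⟨hf, C, hC⟩ := hf
  obtain ⟨hg, D, hD⟩ := hg
  exact ⟨hf.add hg, C + D, fun z h0 h1 =>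
    (norm_add_le _ _).trans (add_le_add (hC z h0 h1) (hD z h0 h1))⟩

theorem NiceFn.mul {f g : ℂ → ℂ} (hf : NiceFn f) (hg : NiceFn g) :
    NiceFn (fun z => f z * g z) := by
  obtain ⟨hf, C, hC⟩ := hf
  obtain ⟨hg, D, hD⟩ := hg
  refine ⟨hf.mul hg, C * D, fun z h0 h1 => ?_⟩
  rw [norm_mul]
  exact mul_le_mul (hC z h0 h1) (hD z h0 h1) (norm_nonneg _) ((norm_nonneg _).trans (hC z h0 h1))

theorem NiceFn.sum {κ : Type*} (s : Finset κ) {f : κ → ℂ → ℂ} (hf : ∀ i, NiceFn (f i)) :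
    NiceFn (fun z => ∑ i ∈ s, f i z) := by
  classical
  induction s using Finset.induction_on with
  | empty => simpa using NiceFn.const 0
  | insert a s ha ih => simpa [Finset.sum_insert ha] using (hf a).add ih

theorem NiceFn.exp (a b : ℝ) : NiceFn (fun z => Complex.exp ((a * z + b) : ℂ)) := by
  refine ⟨by fun_prop, Real.exp (|a| + |b|), fun z h0 h1 => ?_⟩
  rw [Complex.norm_exp]
  apply Real.exp_le_exp.2
  simp only [Complex.add_re, Complex.mul_re, Complex.ofReal_re, Complex.ofReal_im, zero_mul, sub_zero]
  have h2 : a * z.re ≤ |a| := by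
    calc a * z.re ≤ |a| * z.re := mul_le_mul_of_nonneg_right (le_abs_self a) h0
      _ ≤ |a| * 1 := mul_le_mul_of_nonneg_left h1 (abs_nonneg a)
      _ = |a| := mul_one _
  linarith [le_abs_self b]

theorem NiceFn.max_principle {f : ℂ → ℂ} (hf : NiceFn f) (M : ℝ) (s : ℝ) (hs0 : 0 < s) (hs1 : s < 1)
    (h0 : ∀ z : ℂ, z.re = 0 → ‖f z‖ ≤ M) (h1 : ∀ z : ℂ, z.re = 1 → ‖f z‖ ≤ M)
    (hM : f s = M) (hM0 : 0 ≤ M) : f 0 = M ∧ f 1 = M := by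
  obtain ⟨hd, C, hC⟩ := hf
  have hb : ∀ z : ℂ, 0 ≤ z.re → z.re ≤ 1 → ‖f z‖ ≤ M := by
    intro z hz0 hz1
    refine PhragmenLindelof.vertical_strip (a := 0) (b := 1) hd.diffContOnCl ?_ h0 h1 hz0 hz1
    refine ⟨0, by simp [Real.pi_pos], 0, ?_⟩
    refine Asymptotics.IsBigO.of_bound C ?_
    refine Filter.Eventually.filter_mono inf_le_right ?_
    rw [Filter.eventually_principal]
    intro z hz
    simpa using hC z hz.1.le hz.2.le
  set U : Set ℂ := Complex.re ⁻¹' Set.Ioo 0 1 with hU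
  have hpre : IsPreconnected U :=
    ((convex_Ioo (0:ℝ) 1).is_linear_preimage (IsLinearMap.mk Complex.add_re (by simp))).isPreconnected
  have hopen : IsOpen U := isOpen_Ioo.preimage Complex.continuous_re
  have hmem : (s : ℂ) ∈ U := by simp [hU, hs0, hs1]
  have key := Complex.eqOn_closure_of_isPreconnected_of_isMaxOn_norm hpre hopen
    hd.diffContOnCl hmem (by
      intro z hz
      have := hb z hz.1.le hz.2.le
      simpa [hM, abs_of_nonneg hM0] using this)
  have hcl : closure U = Complex.re ⁻¹' Set.Icc 0 1 := by
    rw [hU, Complex.closure_preimage_re, closure_Ioo (by norm_num)]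
  rw [hcl] at key
  constructor
  · have := key (x := 0) (by simp)
    simpa [hM] using this
  · have := key (x := 1) (by simp)
    simpa [hM] using this

/-! ### Power families -/

/-- `U diag(e_i exp(z l_i)) U†`. -/
def spw {ι : Type*} [Fintype ι] [DecidableEq ι] (U : Matrix ι ι ℂ) (l : ι → ℝ) (e : ι → Prop)
    [DecidablePred e] (z : ℂ) : Matrix ι ι ℂ :=
  U * Matrix.diagonal (fun i => if e i then Complex.exp (z * l i) else 0) * Uᴴ

structure PowFam {ι : Type*} [Fintype ι] [DecidableEq ι] (T : ℂ → Matrix ι ι ℂ) : Prop where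
  mul : ∀ z w, T z * T w = T (z + w)
  star : ∀ z, (T z)ᴴ = T (starRingEnd ℂ z)
  nice : ∀ (a b : ℝ) i j, NiceFn (fun z => T (a * z + b) i j)
  comm : ∀ (B : Matrix ι ι ℂ) (c : ℝ), c ≠ 0 → B * T c = T c * B → ∀ z, B * T z = T z * B

section
variable {ι : Type*} [Fintype ι] [DecidableEq ι]

theorem spw_powFam (U : Matrix ι ι ℂ) (hU : Uᴴ * U = 1) (l : ι → ℝ) (e : ι → Prop)
    [DecidablePred e] : PowFam (spw U l e) := by
  have hU' : U * Uᴴ = 1 := mul_eq_one_comm.1 hU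
  refine ⟨?_, ?_, ?_, ?_⟩
  · intro z w
    unfold spw
    have : ∀ D D' : Matrix ι ι ℂ, U * D * Uᴴ * (U * D' * Uᴴ) = U * (D * D') * Uᴴ := by
      intro D D'
      calc _ = U * D * (Uᴴ * U) * D' * Uᴴ := by simp only [Matrix.mul_assoc]
        _ = _ := by rw [hU]; simp only [Matrix.mul_assoc, Matrix.one_mul]
    rw [this, Matrix.diagonal_mul_diagonal]
    congr 3
    funext i
    split_ifs
    · rw [← Complex.exp_add, add_mul]
    · simp
  · intro z
    unfold spw
    rw [Matrix.conjTranspose_mul, Matrix.conjTranspose_mul, Matrix.conjTranspose_conjTranspose,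
      Matrix.diagonal_conjTranspose, Matrix.mul_assoc]
    congr 3
    funext i
    simp only [Pi.star_apply]
    split_ifs
    · rw [Complex.star_def, ← Complex.exp_conj, map_mul, Complex.conj_ofReal]
    · simp
  · intro a b i j
    have : (fun z : ℂ => spw U l e (a * z + b) i j) = fun z : ℂ => ∑ k, (U i k * Uᴴ k j) *
        (if e k then Complex.exp ((a * l k : ℝ) * z + (b * l k : ℝ)) else 0) := by
      funext z
      unfold spw
      rw [Matrix.mul_apply]
      refine Finset.sum_congr rfl fun k _ => ?_
      rw [Matrix.mul_diagonal]
      split_ifs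
      · push_cast
        rw [show (a * z + b) * (l k : ℂ) = a * l k * z + b * l k by ring]
        ring
      · ring
    rw [this]
    refine NiceFn.sum _ fun k => (NiceFn.const _).mul ?_
    by_cases h : e k
    · simpa [h] using NiceFn.exp (a * l k) (b * l k)
    · simpa [h] using NiceFn.const 0
  · intro B c hc hB z
    set B' := Uᴴ * B * U with hB'
    have hconj : ∀ D : Matrix ι ι ℂ, B * (U * D * Uᴴ) = (U * D * Uᴴ) * B ↔ B' * D = D * B' := by
      intro D
      constructor
      · intro h
        calc B' * D = Uᴴ * (B * (U * D * Uᴴ)) * U := by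
              simp only [hB', Matrix.mul_assoc, hU, Matrix.mul_one]
          _ = (Uᴴ * U) * D * B' := by rw [h]; simp only [hB', Matrix.mul_assoc]
          _ = D * B' := by rw [hU, Matrix.one_mul]
      · intro h
        calc B * (U * D * Uᴴ) = (U * Uᴴ) * B * (U * D * Uᴴ) := by rw [hU', Matrix.one_mul]
          _ = U * (B' * D) * Uᴴ := by simp only [hB', Matrix.mul_assoc]
          _ = U * D * Uᴴ * B * (U * Uᴴ) := by rw [h]; simp only [hB', Matrix.mul_assoc]
          _ = _ := by rw [hU', Matrix.mul_one]
    unfold spw at hB ⊢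
    rw [hconj] at hB ⊢
    ext i j
    have h1 := congrFun (congrFun hB i) j
    rw [Matrix.mul_diagonal, Matrix.diagonal_mul] at h1 ⊢
    by_cases h0 : B' i j = 0
    · simp [h0]
    rw [mul_comm] at h1
    have h2 := mul_right_cancel₀ h0 h1
    rw [mul_comm]
    congr 1
    by_cases hi : e i <;> by_cases hj : e j <;> simp [hi, hj] at h2 ⊢
    swap
    · exact absurd h2.symm (Complex.exp_ne_zero _)
    have h3 : Complex.exp ((c * l j : ℝ) : ℂ) = Complex.exp ((c * l i : ℝ) : ℂ) := by
      push_cast; exact h2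
    rw [← Complex.ofReal_exp, ← Complex.ofReal_exp, Complex.ofReal_inj, Real.exp_eq_exp] at h3
    rw [mul_left_cancel₀ hc h3]

theorem psd_factor {P : Matrix ι ι ℂ} (hP : P.PosSemidef) : ∃ B : Matrix ι ι ℂ, P = Bᴴ * B := by
  open scoped MatrixOrder in
  obtain ⟨B, hB⟩ := CStarAlgebra.nonneg_iff_eq_star_mul_self.1 hP.nonneg
  exact ⟨B, hB⟩

theorem retr_nonneg {P : Matrix ι ι ℂ} (hP : P.PosSemidef) : 0 ≤ retr P :=
  (Complex.nonneg_iff.1 hP.trace_nonneg).1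

theorem psd_trace_eq {P : Matrix ι ι ℂ} (hP : P.PosSemidef) : P.trace = (retr P : ℂ) := by
  apply Complex.ext
  · simp [retr]
  · simpa using (Complex.nonneg_iff.1 hP.trace_nonneg).2.symm

theorem psd_mul_eq_zero {P : Matrix ι ι ℂ} (hP : P.PosSemidef) (x : Matrix ι ι ℂ)
    (h : retr (xᴴ * P * x) ≤ 0) : P * x = 0 := by
  have hx := hP.conjTranspose_mul_mul_same x
  have h0 : (xᴴ * P * x).trace = 0 := by
    rw [psd_trace_eq hx, le_antisymm h (retr_nonneg hx)]; simp
  obtain ⟨B, rfl⟩ := psd_factor hP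
  have : (B * x)ᴴ * (B * x) = xᴴ * (Bᴴ * B) * x := by
    simp only [Matrix.conjTranspose_mul, Matrix.mul_assoc]
  rw [← this, Matrix.trace_conjTranspose_mul_self_eq_zero_iff] at h0
  rw [Matrix.mul_assoc, h0, Matrix.mul_zero]

theorem psd_trace_mul_nonneg {P R : Matrix ι ι ℂ} (hP : P.PosSemidef) (hR : R.PosSemidef) :
    0 ≤ retr (P * R) := by
  obtain ⟨B, rfl⟩ := psd_factor hP
  have := retr_nonneg (hR.mul_mul_conjTranspose_same B)
  unfold retr at *
  rwa [Matrix.mul_assoc, Matrix.trace_mul_comm]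

theorem psd_mul_zero_of_trace {P R : Matrix ι ι ℂ} (hP : P.PosSemidef) (hR : R.PosSemidef)
    (h : retr (R * P) ≤ 0) : P * R = 0 := by
  obtain ⟨B, rfl⟩ := psd_factor hR
  have : P * Bᴴ = 0 := by
    apply psd_mul_eq_zero hP
    rw [Matrix.conjTranspose_conjTranspose]
    unfold retr at *
    rwa [Matrix.mul_assoc, Matrix.trace_mul_comm] at h
  rw [← Matrix.mul_assoc, this, Matrix.zero_mul]

theorem norm_le_of_unit {u : ℂ} {M : ℝ} (h : ∀ c : ℂ, ‖c‖ = 1 → (c * u).re ≤ M) : ‖u‖ ≤ M := by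
  by_cases hu : u = 0
  · subst hu; simpa using h 1 (by simp)
  · have hn : (‖u‖ : ℂ) ≠ 0 := by simpa using hu
    have := h (starRingEnd ℂ u / ‖u‖) (by simp [hu])
    rw [div_mul_eq_mul_div, mul_comm, Complex.mul_conj, Complex.normSq_eq_norm_sq] at this
    rw [← Complex.ofReal_div, Complex.ofReal_re, pow_two, mul_div_assoc, div_self (by simpa using hu),
      mul_one] at this
    exact this

/-- Semi-inner product. -/
def sip {κ : Type*} [Fintype κ] (P : κ → Matrix ι ι ℂ) (a b : κ → Matrix ι ι ℂ) : ℂ :=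
  ∑ i, ((a i)ᴴ * P i * b i).trace

theorem sip_expand {κ : Type*} [Fintype κ] (P : κ → Matrix ι ι ℂ) (hP : ∀ i, (P i).PosSemidef)
    (a b : κ → Matrix ι ι ℂ) (c : ℂ) (hc : ‖c‖ = 1) :
    ∑ i, retr ((a i - c • b i)ᴴ * P i * (a i - c • b i)) =
      (sip P a a).re + (sip P b b).re - 2 * (c * sip P a b).re := by
  unfold sip retr
  rw [Finset.mul_sum]
  simp only [Complex.re_sum]
  rw [Finset.mul_sum, ← Finset.sum_add_distrib, ← Finset.sum_sub_distrib]
  refine Finset.sum_congr rfl fun i _ => ?_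
  have h1 : ((b i)ᴴ * P i * a i).trace = starRingEnd ℂ ((a i)ᴴ * P i * b i).trace := by
    rw [← Complex.star_def, ← Matrix.trace_conjTranspose]
    congr 1
    simp only [Matrix.conjTranspose_mul, Matrix.conjTranspose_conjTranspose, (hP i).1.eq,
      Matrix.mul_assoc]
  have h2 : starRingEnd ℂ c * c = 1 := by
    rw [mul_comm, Complex.mul_conj, Complex.normSq_eq_norm_sq, hc]; simp
  have : ((a i - c • b i)ᴴ * P i * (a i - c • b i)).trace =
      ((a i)ᴴ * P i * a i).trace - c * ((a i)ᴴ * P i * b i).trace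
      - starRingEnd ℂ c * ((b i)ᴴ * P i * a i).trace
      + (starRingEnd ℂ c * c) * ((b i)ᴴ * P i * b i).trace := by
    simp only [Matrix.conjTranspose_sub, Matrix.conjTranspose_smul, Matrix.sub_mul, Matrix.mul_sub,
      Matrix.trace_sub, Matrix.smul_mul, Matrix.mul_smul, Matrix.trace_smul, smul_eq_mul,
      Complex.star_def]
    ring
  rw [this, h1, h2, ← map_mul]
  simp only [Complex.add_re, Complex.sub_re, Complex.conj_re, one_mul]
  ring

theorem sip_norm_le {κ : Type*} [Fintype κ] (P : κ → Matrix ι ι ℂ) (hP : ∀ i, (P i).PosSemidef)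
    (a b : κ → Matrix ι ι ℂ) (M : ℝ) (ha : (sip P a a).re ≤ M) (hb : (sip P b b).re ≤ M) :
    ‖sip P a b‖ ≤ M := by
  apply norm_le_of_unit
  intro c hc
  have h := sip_expand P hP a b c hc
  have h0 : 0 ≤ ∑ i, retr ((a i - c • b i)ᴴ * P i * (a i - c • b i)) :=
    Finset.sum_nonneg fun i _ => retr_nonneg ((hP i).conjTranspose_mul_mul_same _)
  linarith

theorem sip_eq_case {κ : Type*} [Fintype κ] (P : κ → Matrix ι ι ℂ) (hP : ∀ i, (P i).PosSemidef)
    (a b : κ → Matrix ι ι ℂ) (M : ℝ) (ha : (sip P a a).re ≤ M) (hb : (sip P b b).re ≤ M)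
    (h : sip P a b = M) : (sip P a a).re = M ∧ (sip P b b).re = M ∧ ∀ i, P i * a i = P i * b i := by
  have he := sip_expand P hP a b 1 (by simp)
  rw [h] at he
  simp only [one_smul, one_mul, Complex.ofReal_re] at he
  have hnn : ∀ i, 0 ≤ retr ((a i - b i)ᴴ * P i * (a i - b i)) :=
    fun i => retr_nonneg ((hP i).conjTranspose_mul_mul_same _)
  have h0 : 0 ≤ ∑ i, retr ((a i - b i)ᴴ * P i * (a i - b i)) :=
    Finset.sum_nonneg fun i _ => hnn i
  refine ⟨by linarith, by linarith, fun i => ?_⟩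
  have hz : ∑ i, retr ((a i - b i)ᴴ * P i * (a i - b i)) = 0 := by linarith
  have hi := (Finset.sum_eq_zero_iff_of_nonneg (fun i _ => hnn i)).1 hz i (Finset.mem_univ i)
  have := psd_mul_eq_zero (hP i) _ hi.le
  rw [Matrix.mul_sub, sub_eq_zero] at this
  exact this

end

section
variable {ι : Type*} [Fintype ι] [DecidableEq ι]

theorem nice_trace {κ : Type*} [Fintype κ] (A : κ → Matrix ι ι ℂ) (T S : ℂ → Matrix ι ι ℂ)
    (l : κ → ℝ)
    (hT : ∀ i j, NiceFn (fun z => T z i j)) (hS : ∀ i j, NiceFn (fun z => S z i j)) :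
    NiceFn (fun z => ∑ i, (A i * (Complex.exp (z * l i) • (T z * S z))).trace) := by
  refine NiceFn.sum _ fun k => ?_
  simp only [Matrix.trace, Matrix.diag_apply, Matrix.mul_apply, Matrix.smul_apply, smul_eq_mul]
  refine NiceFn.sum _ fun i => NiceFn.sum _ fun j => (NiceFn.const _).mul (NiceFn.mul ?_ ?_)
  · simpa [mul_comm] using NiceFn.exp (l k) 0
  · exact NiceFn.sum _ fun m => (hT _ _).mul (hS _ _)

theorem conj_aff (a b : ℝ) (z : ℂ) : starRingEnd ℂ ((a : ℂ) * z + (b : ℂ)) + ((a : ℂ) * z + (b : ℂ))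
    = ((2 * (a * z.re + b) : ℝ) : ℂ) := by
  rw [add_comm, Complex.add_conj]
  simp

/-- Core theorem: equality (or the reverse inequality) forces commutation. -/
theorem core_commute {κ : Type*} [Fintype κ] (ρ : Matrix ι ι ℂ) (hρ : ρ.PosSemidef)
    (S Xp : ℂ → Matrix ι ι ℂ) (hS : PowFam S) (hX : PowFam Xp) (hS0 : S 0 = 1)
    (α s : ℝ) (hα : 1 / 2 < α) (hα1 : α ≠ 1) (hs : α * s = α - 1)
    (hX1 : Xp 1 = S (((-s / 2 : ℝ)) : ℂ) * ρ * S (((-s / 2 : ℝ)) : ℂ))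
    (P : κ → Matrix ι ι ℂ) (hP : ∀ i, (P i).PosSemidef) (hE : (1 - ∑ i, P i).PosSemidef)
    (hρE : ρ * ∑ i, P i = ρ) (p q l : κ → ℝ) (hp : ∀ i, (ρ * P i).trace = p i)
    (hq : ∀ i, (S 1 * P i).trace = q i)
    (Q Qs : ℝ) (hQ1 : ∑ i, Real.exp (s * l i) * p i = Q) (hQ2 : ∑ i, Real.exp (l i) * q i = Q)
    (hQs : (Xp α).trace = Qs) (hQ0 : 0 ≤ Q)
    (hcase : (1 < α ∧ Qs ≤ Q) ∨ (α < 1 ∧ Q ≤ Qs)) :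
    ρ * S 1 = S 1 * ρ := by
  have hα0 : 0 < α := by linarith
  set E := ∑ i, P i with hEdef
  have hsand : ∀ N : Matrix ι ι ℂ, S (((s / 2 : ℝ)) : ℂ) *
      (S (((-s / 2 : ℝ)) : ℂ) * N * S (((-s / 2 : ℝ)) : ℂ)) * S (((s / 2 : ℝ)) : ℂ) = N := by
    intro N
    have h2 : S (((-s / 2 : ℝ)) : ℂ) * S (((s / 2 : ℝ)) : ℂ) = 1 := by
      rw [hS.mul, ← Complex.ofReal_add, show -s / 2 + s / 2 = 0 by ring, Complex.ofReal_zero, hS0]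
    have h2' : S (((s / 2 : ℝ)) : ℂ) * S (((-s / 2 : ℝ)) : ℂ) = 1 := by
      rw [hS.mul, ← Complex.ofReal_add, show s / 2 + -s / 2 = 0 by ring, Complex.ofReal_zero, hS0]
    rw [← Matrix.mul_assoc, ← Matrix.mul_assoc, h2', Matrix.one_mul, Matrix.mul_assoc, h2,
              Matrix.mul_one]
  set G : Matrix ι ι ℂ := Xp (((-1/2 : ℝ)) : ℂ) * S (((-s / 2 : ℝ)) : ℂ) * ρ with hG
  have hSr : ∀ r : ℝ, (S (r : ℂ))ᴴ = S r := fun r => by rw [hS.star, Complex.conj_ofReal]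
  have hXr : ∀ r : ℝ, (Xp (r : ℂ))ᴴ = Xp r := fun r => by rw [hX.star, Complex.conj_ofReal]
  have hSinv : ∀ z w, z + w = 0 → S z * S w = 1 := fun z w h => by rw [hS.mul, h, hS0]
  -- `Xp 0 * S(-s/2) * ρ = S(-s/2) * ρ`
  have hF1 : Xp 0 * (S (((-s / 2 : ℝ)) : ℂ) * ρ) = S (((-s / 2 : ℝ)) : ℂ) * ρ := by
    have h1 : Xp 0 * Xp 1 = Xp 1 := by rw [hX.mul, zero_add]
    have h2 : S (((-s / 2 : ℝ)) : ℂ) * S (((s / 2 : ℝ)) : ℂ) = 1 := hSinv _ _ (by push_cast; ring)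
    have h3 : Xp 1 * S (((s / 2 : ℝ)) : ℂ) = S (((-s / 2 : ℝ)) : ℂ) * ρ := by
      rw [hX1, Matrix.mul_assoc, h2, Matrix.mul_one]
    rw [← h3, ← Matrix.mul_assoc, h1]
  have hN : Gᴴ * G = ρ := by
    have h2 : S (((-s / 2 : ℝ)) : ℂ) * S (((s / 2 : ℝ)) : ℂ) = 1 := hSinv _ _ (by push_cast; ring)
    have h2' : S (((s / 2 : ℝ)) : ℂ) * S (((-s / 2 : ℝ)) : ℂ) = 1 := hSinv _ _ (by push_cast; ring)
    have h3 : S (((-s / 2 : ℝ)) : ℂ) * (Gᴴ * G) * S (((-s / 2 : ℝ)) : ℂ) = Xp 1 := by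
      have : S (((-s / 2 : ℝ)) : ℂ) * (Gᴴ * G) * S (((-s / 2 : ℝ)) : ℂ)
          = Xp 1 * (Xp (((-1/2 : ℝ)) : ℂ) * Xp (((-1/2 : ℝ)) : ℂ)) * Xp 1 := by
        rw [hX1]
        simp only [hG, Matrix.conjTranspose_mul, hρ.1.eq, hSr, hXr, Matrix.mul_assoc]
      rw [this, hX.mul, hX.mul, hX.mul]
      congr 1; push_cast; ring
    calc Gᴴ * G = S (((s / 2 : ℝ)) : ℂ) * (S (((-s / 2 : ℝ)) : ℂ) * (Gᴴ * G) * S (((-s / 2 : ℝ)) : ℂ))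
          * S (((s / 2 : ℝ)) : ℂ) := (hsand _).symm
      _ = ρ := by rw [h3, hX1, hsand]
  set a : κ → Matrix ι ι ℂ := fun i => (Real.exp (s * l i / 2) : ℂ) • Gᴴ with ha
  set b : ℂ → κ → Matrix ι ι ℂ := fun z i => Complex.exp (z * ((l i / 2 : ℝ) : ℂ)) •
    (S (((1 / 2 : ℝ) : ℂ) * z + ((0 : ℝ) : ℂ)) * Xp (((-α / 2 : ℝ) : ℂ) * z + ((α / 2 : ℝ) : ℂ)))
    with hb
  set h : ℂ → ℂ := fun z => sip P a (b z) with hh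
  have hnice : NiceFn h := by
    have := nice_trace (fun i => (a i)ᴴ * P i) _ _ (fun i => l i / 2)
      (hS.nice (1/2) 0) (hX.nice (-α/2) (α/2))
    simpa [hh, sip, hb] using this
  have haH : ∀ i, (a i)ᴴ = (Real.exp (s * l i / 2) : ℂ) • G := fun i => by
    simp only [ha, Matrix.conjTranspose_smul, Matrix.conjTranspose_conjTranspose, Complex.star_def,
      Complex.conj_ofReal]
  have hexp2 : ∀ i, (Real.exp (s * l i / 2) : ℂ) * (Real.exp (s * l i / 2) : ℂ)
      = (Real.exp (s * l i) : ℂ) := fun i => by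
    rw [← Complex.ofReal_mul, ← Real.exp_add]; congr 2; ring
  have haa : sip P a a = Q := by
    unfold sip
    rw [← hQ1]
    push_cast
    refine Finset.sum_congr rfl fun i _ => ?_
    rw [haH]
    simp only [ha, Matrix.smul_mul, Matrix.mul_smul, Matrix.trace_smul, smul_eq_mul]
    rw [← mul_assoc, hexp2, Matrix.mul_assoc, Matrix.trace_mul_comm, Matrix.mul_assoc, hN,
      Matrix.trace_mul_comm, hp]
    push_cast; rfl
  -- value at `s`
  have hhs : h s = Q := by
    simp only [hh, sip]
    rw [← hQ1]
    push_cast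
    refine Finset.sum_congr rfl fun i _ => ?_
    rw [haH]
    simp only [hb, Matrix.smul_mul, Matrix.mul_smul, Matrix.trace_smul, smul_eq_mul]
    have e1 : ((1 / 2 : ℝ) : ℂ) * s + ((0 : ℝ) : ℂ) = ((s / 2 : ℝ) : ℂ) := by push_cast; ring
    have e2 : ((-α / 2 : ℝ) : ℂ) * s + ((α / 2 : ℝ) : ℂ) = ((1 / 2 : ℝ) : ℂ) := by
      norm_cast; linarith
    have e3 : Complex.exp ((s : ℂ) * ((l i / 2 : ℝ) : ℂ)) = (Real.exp (s * l i / 2) : ℂ) := by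
      push_cast; congr 1; ring
    rw [e1, e2, e3, ← mul_assoc, hexp2]
    have : (G * P i * (S ((s / 2 : ℝ) : ℂ) * Xp ((1 / 2 : ℝ) : ℂ))).trace = p i := by
      calc _ = ((Xp ((1 / 2 : ℝ) : ℂ) * Xp (((-1/2 : ℝ)) : ℂ)) * (S (((-s / 2 : ℝ)) : ℂ) * ρ)
              * P i * S ((s / 2 : ℝ) : ℂ)).trace := by
            rw [← Matrix.mul_assoc, Matrix.trace_mul_comm]
            simp only [hG, Matrix.mul_assoc]
        _ = (S (((-s / 2 : ℝ)) : ℂ) * ρ * P i * S ((s / 2 : ℝ) : ℂ)).trace := by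
            rw [hX.mul, show ((1 / 2 : ℝ) : ℂ) + ((-1/2 : ℝ) : ℂ) = 0 by push_cast; ring, hF1]
        _ = _ := by
            rw [Matrix.trace_mul_comm, ← Matrix.mul_assoc, ← Matrix.mul_assoc,
              hSinv _ _ (by push_cast; ring), Matrix.one_mul, hp]
    rw [this]
    push_cast; rfl
  -- value at `-s`
  have hhms : h ((-s : ℝ) : ℂ) = Qs := by
    simp only [hh, sip]
    have e1 : ((1 / 2 : ℝ) : ℂ) * ((-s : ℝ) : ℂ) + ((0 : ℝ) : ℂ) = ((-s / 2 : ℝ) : ℂ) := by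
      push_cast; ring
    have e2 : ((-α / 2 : ℝ) : ℂ) * ((-s : ℝ) : ℂ) + ((α / 2 : ℝ) : ℂ) = ((α - 1 / 2 : ℝ) : ℂ) := by
      norm_cast; linarith
    have : ∀ i, ((a i)ᴴ * P i * b ((-s : ℝ) : ℂ) i).trace =
        (G * P i * (S ((-s / 2 : ℝ) : ℂ) * Xp ((α - 1 / 2 : ℝ) : ℂ))).trace := by
      intro i
      rw [haH]
      simp only [hb, Matrix.smul_mul, Matrix.mul_smul, Matrix.trace_smul, smul_eq_mul]
      have e3 : Complex.exp (((-s : ℝ) : ℂ) * ((l i / 2 : ℝ) : ℂ)) * (Real.exp (s * l i / 2) : ℂ)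
          = 1 := by
        rw [Complex.ofReal_exp, ← Complex.exp_add, Complex.exp_eq_one_iff]
        exact ⟨0, by push_cast; ring⟩
      rw [e1, e2, ← mul_assoc, e3, one_mul]
    simp only [this]
    rw [← Matrix.trace_sum, ← Finset.sum_mul, ← Finset.mul_sum, ← hEdef, ← hQs]
    congr 1
    calc G * E * (S ((-s / 2 : ℝ) : ℂ) * Xp ((α - 1 / 2 : ℝ) : ℂ))
        = Xp (((-1/2 : ℝ)) : ℂ) * (S ((-s / 2 : ℝ) : ℂ) * (ρ * E) * S ((-s / 2 : ℝ) : ℂ))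
          * Xp ((α - 1 / 2 : ℝ) : ℂ) := by simp only [hG, Matrix.mul_assoc]
      _ = Xp α := by
          rw [hρE, ← hX1, hX.mul, hX.mul]
          congr 1; push_cast; ring
  -- norm of `b` on the line `Re z = 0`
  have hconjb : ∀ z i, (b z i)ᴴ * P i * b z i =
      ((Real.exp (z.re * l i) : ℝ) : ℂ) •
        ((S (((1 / 2 : ℝ) : ℂ) * z + ((0 : ℝ) : ℂ)) * Xp (((-α / 2 : ℝ) : ℂ) * z + ((α / 2 : ℝ) : ℂ)))ᴴ
        * P i * (S (((1 / 2 : ℝ) : ℂ) * z + ((0 : ℝ) : ℂ)) *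
          Xp (((-α / 2 : ℝ) : ℂ) * z + ((α / 2 : ℝ) : ℂ)))) := by
    intro z i
    simp only [hb, Matrix.conjTranspose_smul, Matrix.smul_mul, Matrix.mul_smul, smul_smul]
    congr 1
    rw [Complex.star_def, ← Complex.exp_conj, ← Complex.exp_add, Complex.ofReal_exp]
    congr 1
    have := conj_aff (l i / 2) 0 z
    rw [Complex.ofReal_zero, add_zero, mul_comm] at this
    rw [add_comm, this]
    congr 1; ring
  have hb0 : ∀ z : ℂ, z.re = 0 → (sip P (b z) (b z)).re ≤ Qs := by
    intro z hz
    set T := S (((1 / 2 : ℝ) : ℂ) * z + ((0 : ℝ) : ℂ)) *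
      Xp (((-α / 2 : ℝ) : ℂ) * z + ((α / 2 : ℝ) : ℂ)) with hT
    have h1 : sip P (b z) (b z) = (Tᴴ * E * T).trace := by
      simp only [sip, hconjb, hz, zero_mul, Real.exp_zero, Complex.ofReal_one, one_smul]
      rw [← Matrix.trace_sum, ← Finset.sum_mul, ← Finset.mul_sum]
    have h2 : Tᴴ * T = Xp α := by
      have hS1 : S (starRingEnd ℂ (((1 / 2 : ℝ) : ℂ) * z + ((0 : ℝ) : ℂ))) *
          S (((1 / 2 : ℝ) : ℂ) * z + ((0 : ℝ) : ℂ)) = 1 := by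
        apply hSinv
        rw [conj_aff, hz]; simp
      calc Tᴴ * T = (Xp (((-α / 2 : ℝ) : ℂ) * z + ((α / 2 : ℝ) : ℂ)))ᴴ *
            (S (starRingEnd ℂ (((1 / 2 : ℝ) : ℂ) * z + ((0 : ℝ) : ℂ))) *
          S (((1 / 2 : ℝ) : ℂ) * z + ((0 : ℝ) : ℂ))) *
            Xp (((-α / 2 : ℝ) : ℂ) * z + ((α / 2 : ℝ) : ℂ)) := by
              rw [hT, Matrix.conjTranspose_mul, hS.star]; simp only [Matrix.mul_assoc]
        _ = Xp α := by
              rw [hS1, Matrix.mul_one, hX.star, hX.mul]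
              rw [conj_aff, hz]
              congr 2; ring
    have h3 := retr_nonneg (hE.conjTranspose_mul_mul_same T)
    rw [Matrix.mul_sub, Matrix.sub_mul, Matrix.mul_one, h2] at h3
    unfold retr at h3
    rw [Matrix.trace_sub, hQs, Complex.sub_re, Complex.ofReal_re] at h3
    rw [h1]; linarith
  set b' : κ → Matrix ι ι ℂ := fun i => (Real.exp (l i / 2) : ℂ) • S ((1 / 2 : ℝ) : ℂ) with hb'
  have hV : ∀ i, 0 ≤ Real.exp (l i) := fun i => (Real.exp_pos _).le
  have hb1 : ∀ z : ℂ, z.re = 1 → (sip P (b z) (b z)).re ≤ Q := by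
    intro z hz
    set V : Matrix ι ι ℂ := ∑ i, ((Real.exp (l i) : ℝ) : ℂ) • P i with hVdef
    have hVpsd : V.PosSemidef := by
      apply Matrix.posSemidef_sum
      intro i _
      exact (hP i).smul (by exact_mod_cast hV i)
    set T := S (((1 / 2 : ℝ) : ℂ) * z + ((0 : ℝ) : ℂ)) with hT
    set R := Xp (((-α / 2 : ℝ) : ℂ) * z + ((α / 2 : ℝ) : ℂ)) with hR
    have h1 : sip P (b z) (b z) = ((T * R)ᴴ * V * (T * R)).trace := by
      simp only [sip, hconjb, hz, one_mul]
      rw [← Matrix.trace_sum, hVdef, Finset.mul_sum, Finset.sum_mul]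
      simp only [Matrix.smul_mul, Matrix.mul_smul, hT, hR]
    have hRR : R * Rᴴ = Xp 0 := by
      rw [hR, hX.star, hX.mul, add_comm, conj_aff, hz, ← Complex.ofReal_zero]
      congr 2; ring
    have hTT : T * Tᴴ = S 1 := by
      rw [hT, hS.star, hS.mul, add_comm, conj_aff, hz, ← Complex.ofReal_one]
      congr 2; ring
    have h2 : ((T * R)ᴴ * V * (T * R)).trace = (Xp 0 * (Tᴴ * V * T)).trace := by
      rw [← hRR, ← Matrix.mul_assoc, Matrix.trace_mul_comm, Matrix.conjTranspose_mul]
      simp only [Matrix.mul_assoc]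
    have h3 : (Tᴴ * V * T).trace = Q := by
      rw [Matrix.trace_mul_comm, ← Matrix.mul_assoc, hTT, hVdef, Finset.mul_sum, Matrix.trace_sum,
        ← hQ2]
      push_cast
      refine Finset.sum_congr rfl fun i _ => ?_
      rw [Matrix.mul_smul, Matrix.trace_smul, hq, smul_eq_mul]
    have hproj : (1 - Xp 0).PosSemidef := by
      have hx0 : (Xp 0)ᴴ = Xp 0 := by simpa using hXr 0
      have : (1 - Xp 0)ᴴ * (1 - Xp 0) = 1 - Xp 0 := by
        have : Xp 0 * Xp 0 = Xp 0 := by rw [hX.mul, zero_add]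
        rw [Matrix.conjTranspose_sub, hx0, Matrix.conjTranspose_one, Matrix.sub_mul, Matrix.mul_sub,
          Matrix.mul_sub, this]
        simp
      rw [← this]
      exact Matrix.posSemidef_conjTranspose_mul_self _
    have h4 := psd_trace_mul_nonneg hproj (hVpsd.conjTranspose_mul_mul_same T)
    rw [Matrix.sub_mul, Matrix.one_mul] at h4
    unfold retr at h4
    rw [Matrix.trace_sub, Complex.sub_re, h3, Complex.ofReal_re] at h4
    rw [h1, h2]; linarith
  set M := max Q Qs with hM
  have hM0 : 0 ≤ M := hQ0.trans (le_max_left _ _)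
  have haM : (sip P a a).re ≤ M := by rw [haa]; exact le_max_left _ _
  have hends : h 0 = M ∧ h 1 = M := by
    have hl0 : ∀ z : ℂ, z.re = 0 → ‖h z‖ ≤ M := fun z hz =>
      sip_norm_le P hP _ _ M haM ((hb0 z hz).trans (le_max_right _ _))
    have hl1 : ∀ z : ℂ, z.re = 1 → ‖h z‖ ≤ M := fun z hz =>
      sip_norm_le P hP _ _ M haM ((hb1 z hz).trans (le_max_left _ _))
    rcases hcase with ⟨h1, h2⟩ | ⟨h1, h2⟩
    · refine hnice.max_principle M s (by nlinarith) (by nlinarith) hl0 hl1 ?_ hM0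
      rw [hhs, hM, max_eq_left h2]
    · refine hnice.max_principle M (-s) (by nlinarith) (by nlinarith) hl0 hl1 ?_ hM0
      rw [hhms, hM, max_eq_right h2]
  have hb'b' : (sip P b' b').re = Q := by
    have : sip P b' b' = Q := by
      unfold sip
      rw [← hQ2]
      push_cast
      refine Finset.sum_congr rfl fun i _ => ?_
      simp only [hb', Matrix.conjTranspose_smul, Matrix.smul_mul, Matrix.mul_smul,
        Matrix.trace_smul, smul_eq_mul, hSr, Complex.star_def, Complex.conj_ofReal]
      rw [← mul_assoc, ← Complex.ofReal_mul, ← Real.exp_add, Matrix.trace_mul_comm,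
        ← Matrix.mul_assoc, hS.mul, show ((1 / 2 : ℝ) : ℂ) + ((1 / 2 : ℝ) : ℂ) = 1 by
          push_cast; ring, hq]
      rw [show l i / 2 + l i / 2 = l i by ring]
      push_cast; rfl
    rw [this, Complex.ofReal_re]
  have hab' : sip P a b' = M := by
    rw [← hends.2]
    simp only [hh, sip]
    refine Finset.sum_congr rfl fun i _ => ?_
    rw [haH]
    simp only [hb, hb', Matrix.smul_mul, Matrix.mul_smul, Matrix.trace_smul, smul_eq_mul]
    have e1 : ((1 / 2 : ℝ) : ℂ) * 1 + ((0 : ℝ) : ℂ) = ((1 / 2 : ℝ) : ℂ) := by push_cast; ring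
    have e2 : ((-α / 2 : ℝ) : ℂ) * 1 + ((α / 2 : ℝ) : ℂ) = 0 := by push_cast; ring
    rw [e1, e2, one_mul, Complex.ofReal_exp (l i / 2)]
    congr 2
    have hXG : Xp 0 * G = G := by
      rw [hG, ← Matrix.mul_assoc, ← Matrix.mul_assoc, hX.mul, zero_add]
    conv_rhs => rw [← Matrix.mul_assoc, Matrix.trace_mul_comm, ← Matrix.mul_assoc,
      ← Matrix.mul_assoc, hXG]
  obtain ⟨hQM, hbM, hPb⟩ := sip_eq_case P hP a (b 0) M haM
    ((hb0 0 (by simp)).trans (le_max_right _ _)) hends.1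
  obtain ⟨-, -, hPb'⟩ := sip_eq_case P hP a b' M haM (hb'b'.le.trans (le_max_left _ _)) hab'
  set y := Xp ((α / 2 : ℝ) : ℂ) with hy
  set τ := S ((1 / 2 : ℝ) : ℂ) with hτ
  have hb00 : ∀ i, b 0 i = y := fun i => by
    simp [hb, hS0, hy]
  have hyH : yᴴ = y := hXr _
  have hτH : τᴴ = τ := hSr _
  have hPy : ∀ i, P i * y = ((Real.exp (l i / 2) : ℝ) : ℂ) • (P i * τ) := fun i => by
    have := (hPb i).symm.trans (hPb' i)
    rw [hb00] at this
    rw [this, hb', Matrix.mul_smul]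
  have hEy : E * y = y := by
    have h1 : sip P (b 0) (b 0) = (yᴴ * E * y).trace := by
      simp only [sip, hb00]
      rw [← Matrix.trace_sum, ← Finset.sum_mul, ← Finset.mul_sum]
    have h2 : yᴴ * y = Xp α := by
      rw [hyH, hy, hX.mul]; congr 1; push_cast; ring
    have h3 : (1 - E) * y = 0 := by
      apply psd_mul_eq_zero hE
      rw [Matrix.mul_sub, Matrix.sub_mul, Matrix.mul_one, h2]
      unfold retr
      rw [Matrix.trace_sub, hQs, Complex.sub_re, ← h1, hbM, Complex.ofReal_re]
      linarith [le_max_right Q Qs]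
    rw [Matrix.sub_mul, Matrix.one_mul, sub_eq_zero] at h3
    exact h3.symm
  set Mm : Matrix ι ι ℂ := ∑ i, ((Real.exp (l i / 2) : ℝ) : ℂ) • P i with hMm
  have hMH : Mmᴴ = Mm := by
    rw [hMm, Matrix.conjTranspose_sum]
    refine Finset.sum_congr rfl fun i _ => ?_
    rw [Matrix.conjTranspose_smul, (hP i).1.eq, Complex.star_def, Complex.conj_ofReal]
  have hyM : y = Mm * τ := by
    rw [← hEy, hEdef, Finset.sum_mul, hMm, Finset.sum_mul]
    refine Finset.sum_congr rfl fun i _ => ?_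
    rw [hPy, Matrix.smul_mul]
  have hyM' : y = τ * Mm := by
    rw [← hyH, hyM, Matrix.conjTranspose_mul, hMH, hτH]
  have hcomm1 : τ * y = y * τ := by
    conv_lhs => rw [hyM]
    conv_rhs => rw [hyM']
    rw [Matrix.mul_assoc]
  have hττ : τ * τ = S 1 := by
    rw [hτ, hS.mul]; congr 1; push_cast; ring
  have hcomm2 : S 1 * y = y * S 1 := by
    rw [← hττ, Matrix.mul_assoc, hcomm1, ← Matrix.mul_assoc, hcomm1, Matrix.mul_assoc]
  have hcomm3 : S 1 * Xp 1 = Xp 1 * S 1 :=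
    hX.comm _ (α / 2) (by positivity) hcomm2 1
  have hcS : ∀ z, S 1 * S z = S z * S 1 := fun z => by rw [hS.mul, hS.mul, add_comm]
  have hρeq : ρ = S ((s / 2 : ℝ) : ℂ) * Xp 1 * S ((s / 2 : ℝ) : ℂ) := by
    have h2 : S (((-s / 2 : ℝ)) : ℂ) * S (((s / 2 : ℝ)) : ℂ) = 1 := hSinv _ _ (by push_cast; ring)
    have h2' : S (((s / 2 : ℝ)) : ℂ) * S (((-s / 2 : ℝ)) : ℂ) = 1 := hSinv _ _ (by push_cast; ring)
    rw [hX1, ← Matrix.mul_assoc, ← Matrix.mul_assoc, h2', Matrix.one_mul,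
              Matrix.mul_assoc, h2, Matrix.mul_one]
  have c1 : Commute (S 1) (S ((s / 2 : ℝ) : ℂ)) := hcS _
  have c2 : Commute (S 1) (Xp 1) := hcomm3
  have c3 := (c1.mul_right c2).mul_right c1
  rw [← hρeq] at c3
  exact c3.symm

end

theorem convexHull_compact {E : Type*} [AddCommGroup E] [Module ℝ E] [TopologicalSpace E]
    [ContinuousAdd E] [ContinuousSMul ℝ E] [FiniteDimensional ℝ E] {K : Set E} (hK : IsCompact K) :
    IsCompact (convexHull ℝ K) := by
  set N := Module.finrank ℝ E + 1 with hN
  have himg : convexHull ℝ K = (fun p : (Fin N → ℝ) × (Fin N → E) => ∑ j, p.1 j • p.2 j) ''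
      (stdSimplex ℝ (Fin N) ×ˢ Set.univ.pi fun _ => K) := by
    apply Set.Subset.antisymm
    · intro x hx
      obtain ⟨ι', _, z, w, hz, haff, hw, hw1, hx⟩ := eq_pos_convex_span_of_mem_convexHull hx
      have hcard : Fintype.card ι' ≤ Fintype.card (Fin N) := by
        rw [Fintype.card_fin]
        refine haff.card_le_finrank_succ.trans ?_
        have := Submodule.finrank_le (vectorSpan ℝ (Set.range z))
        omega
      obtain ⟨f⟩ := Function.Embedding.nonempty_of_card_le hcard
      have hne : Nonempty ι' := by
        by_contra hcon
        rw [not_nonempty_iff] at hcon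
        simp at hw1
      obtain ⟨i0⟩ := hne
      refine ⟨(Function.extend f w 0, Function.extend f z (fun _ => z i0)), ⟨⟨?_, ?_⟩, ?_⟩, ?_⟩
      · intro j
        by_cases hj : ∃ i, f i = j
        · obtain ⟨i, rfl⟩ := hj
          simp only [f.injective.extend_apply]
          exact (hw i).le
        · simp [Function.extend_apply' _ _ _ hj]
      · rw [← hw1]
        symm
        refine Fintype.sum_of_injective f f.injective _ _ ?_ ?_
        · intro j hj
          exact Function.extend_apply' _ _ _ hj
        · intro i
          exact (f.injective.extend_apply _ _ _).symm
      · intro j _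
        by_cases hj : ∃ i, f i = j
        · obtain ⟨i, rfl⟩ := hj
          simp only [f.injective.extend_apply]
          exact hz ⟨i, rfl⟩
        · simp only [Function.extend_apply' _ _ _ hj]
          exact hz ⟨i0, rfl⟩
      · rw [← hx]
        symm
        refine Fintype.sum_of_injective f f.injective _ _ ?_ ?_
        · intro j hj
          have : Function.extend f w 0 j = 0 := Function.extend_apply' _ _ _ hj
          simp only [this, zero_smul]
        · intro i
          simp only [f.injective.extend_apply]
    · rintro _ ⟨⟨w, z⟩, ⟨hw, hz⟩, rfl⟩
      exact mem_convexHull_of_exists_fintype w z hw.1 hw.2 (fun i => hz i trivial) rfl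
  rw [himg]
  refine ((isCompact_stdSimplex ℝ _).prod (isCompact_univ_pi fun _ => hK)).image ?_
  fun_prop

section
variable {ι : Type*} [Fintype ι] [DecidableEq ι]

theorem density_compact : IsCompact {B : Matrix ι ι ℂ | (Bᴴ * B).trace = 1} := by
  have hc : IsCompact (Set.univ.pi fun _ : ι => Set.univ.pi fun _ : ι =>
      Metric.closedBall (0 : ℂ) 1) :=
    isCompact_univ_pi fun _ => isCompact_univ_pi fun _ => isCompact_closedBall _ _
  refine IsCompact.of_isClosed_subset (X := Matrix ι ι ℂ) hc ?_ ?_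
  · exact isClosed_eq (by fun_prop) continuous_const
  · intro B hB i _ j _
    rw [mem_closedBall_zero_iff]
    have h1 : (Bᴴ * B).trace = ((∑ j, ∑ i, ‖B i j‖ ^ 2 : ℝ) : ℂ) := by
      simp only [Matrix.trace, Matrix.diag_apply, Matrix.mul_apply, Matrix.conjTranspose_apply]
      push_cast
      refine Finset.sum_congr rfl fun j _ => Finset.sum_congr rfl fun i _ => ?_
      rw [Complex.star_def, mul_comm, Complex.mul_conj, Complex.normSq_eq_norm_sq]
      push_cast; rfl
    have h2 : ∑ j, ∑ i, ‖B i j‖ ^ 2 = 1 := by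
      have : (Bᴴ * B).trace = 1 := hB
      rw [h1] at this
      exact_mod_cast this
    have h3 : ‖B i j‖ ^ 2 ≤ 1 := by
      rw [← h2]
      calc ‖B i j‖ ^ 2 ≤ ∑ i, ‖B i j‖ ^ 2 :=
            Finset.single_le_sum (f := fun i => ‖B i j‖ ^ 2) (fun _ _ => by positivity)
              (Finset.mem_univ i)
        _ ≤ _ := Finset.single_le_sum (f := fun j => ∑ i, ‖B i j‖ ^ 2)
              (fun _ _ => by positivity) (Finset.mem_univ j)
    exact (sq_le_one_iff₀ (norm_nonneg _)).1 h3

theorem retr_smul (c : ℝ) (A : Matrix ι ι ℂ) : retr (c • A) = c * retr A := by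
  simp [retr, Matrix.trace_smul]

theorem psd_eq_zero_of_retr {P : Matrix ι ι ℂ} (hP : P.PosSemidef) (h : retr P = 0) : P = 0 := by
  have := psd_mul_eq_zero hP 1 (by simp [h])
  simpa using this

theorem psd_smul {P : Matrix ι ι ℂ} (hP : P.PosSemidef) {c : ℝ} (hc : 0 ≤ c) :
    (c • P).PosSemidef := hP.smul hc

theorem uniform_bound (g : Matrix ι ι ℂ → ℝ)
    (hcont : ContinuousOn g {R | R.PosSemidef ∧ R.trace = 1})
    (hhom : ∀ (c : ℝ) (R : Matrix ι ι ℂ), 0 ≤ c → R.PosSemidef → g (c • R) = c * g R)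
    (Pj : Matrix ι ι ℂ) (hd : 0 < retr Pj) (Qs : ℝ)
    (h : ∀ (κ : Type) [Fintype κ] (P : κ → Matrix ι ι ℂ), (∀ i, (P i).PosSemidef) →
      ∑ i, P i = Pj → ∑ i, g (P i) < Qs) :
    ∃ c < Qs, ∀ (κ : Type) [Fintype κ] (P : κ → Matrix ι ι ℂ), (∀ i, (P i).PosSemidef) →
      ∑ i, P i = Pj → ∑ i, g (P i) ≤ c := by
  set d := retr Pj with hddef
  set 𝓑 := {B : Matrix ι ι ℂ | (Bᴴ * B).trace = 1} with h𝓑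
  set K : Set (Matrix ι ι ℂ × ℝ) := (fun B => (Bᴴ * B, g (Bᴴ * B))) '' 𝓑 with hKdef
  have hK : IsCompact K := by
    refine density_compact.image_of_continuousOn ?_
    have h1 : Continuous fun B : Matrix ι ι ℂ => Bᴴ * B := by fun_prop
    refine h1.continuousOn.prodMk (hcont.comp h1.continuousOn ?_)
    intro B hB
    exact ⟨Matrix.posSemidef_conjTranspose_mul_self B, hB⟩
  have hKmem : ∀ R : Matrix ι ι ℂ, R.PosSemidef → R.trace = 1 → (R, g R) ∈ K := by
    intro R hR hR1
    obtain ⟨B, rfl⟩ := psd_factor hR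
    exact ⟨B, hR1, rfl⟩
  set T : Set ℝ := Prod.snd '' (convexHull ℝ K ∩ Prod.fst ⁻¹' {(1 / d) • Pj}) with hTdef
  have hT : IsCompact T := by
    refine IsCompact.image ?_ continuous_snd
    exact (convexHull_compact hK).inter_right (isClosed_singleton.preimage continuous_fst)
  have hfam : ∀ (κ : Type) [Fintype κ] (P : κ → Matrix ι ι ℂ), (∀ i, (P i).PosSemidef) →
      ∑ i, P i = Pj → (∑ i, g (P i)) / d ∈ T := by
    intro κ _ P hP hsum
    classical
    have hg0 : g 0 = 0 := by
      simpa using hhom 0 0 le_rfl Matrix.PosSemidef.zero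
    have hsum' : ∑ i, retr (P i) = d := by
      rw [hddef, ← hsum]; simp [retr, Matrix.trace_sum]
    have hex : ∃ i, P i ≠ 0 := by
      by_contra hcon
      push Not at hcon
      have : d = 0 := by rw [← hsum']; simp [hcon, retr]
      linarith
    obtain ⟨i0, hi0⟩ := hex
    have hpos : ∀ i, P i ≠ 0 → 0 < retr (P i) := fun i hi =>
      lt_of_le_of_ne (retr_nonneg (hP i)) fun h0 => hi (psd_eq_zero_of_retr (hP i) h0.symm)
    set j : κ → κ := fun i => if P i = 0 then i0 else i with hj
    have hPj : ∀ i, P (j i) ≠ 0 := by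
      intro i
      by_cases hi : P i = 0 <;> simp [hj, hi, hi0]
    set R : κ → Matrix ι ι ℂ := fun i => (1 / retr (P (j i))) • P (j i) with hR
    have hRpsd : ∀ i, (R i).PosSemidef := fun i =>
      psd_smul (hP _) (by have := hpos _ (hPj i); positivity)
    have hRtr : ∀ i, (R i).trace = 1 := by
      intro i
      rw [psd_trace_eq (hRpsd i), hR, retr_smul, one_div, inv_mul_cancel₀ (hpos _ (hPj i)).ne']
      simp
    have hPR : ∀ i, retr (P i) • R i = P i := by
      intro i
      by_cases hi : P i = 0
      · simp [hi, retr]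
      · have : j i = i := by simp [hj, hi]
        rw [hR]; simp only [this]
        rw [smul_smul, mul_one_div_cancel (hpos i hi).ne', one_smul]
    refine ⟨((1 / d) • Pj, (∑ i, g (P i)) / d), ⟨?_, rfl⟩, rfl⟩
    refine mem_convexHull_of_exists_fintype (fun i => retr (P i) / d) (fun i => (R i, g (R i)))
      (fun i => div_nonneg (retr_nonneg (hP i)) hd.le) ?_ (fun i => hKmem _ (hRpsd i) (hRtr i)) ?_
    · rw [← Finset.sum_div, hsum', div_self hd.ne']
    · rw [Prod.ext_iff]
      constructor
      · simp only [Prod.fst_sum, Prod.smul_fst]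
        rw [← hsum, Finset.smul_sum]
        refine Finset.sum_congr rfl fun i _ => ?_
        rw [show retr (P i) / d = (1 / d) * retr (P i) by ring, mul_smul, hPR]
      · simp only [Prod.snd_sum, Prod.smul_snd]
        rw [Finset.sum_div]
        refine Finset.sum_congr rfl fun i _ => ?_
        conv_rhs => rw [← hPR i]
        rw [hhom _ _ (retr_nonneg (hP i)) (hRpsd i), smul_eq_mul]
        ring
  have hlt : ∀ t ∈ T, d * t < Qs := by
    rintro t ⟨⟨A, t'⟩, ⟨hmem, hA⟩, rfl⟩
    obtain ⟨κ, _, w, z, hw, hw1, hz, hx⟩ := mem_convexHull_iff_exists_fintype.1 hmem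
    choose B hB hBz using hz
    rw [Prod.ext_iff] at hx
    simp only [Prod.fst_sum, Prod.smul_fst, Prod.snd_sum, Prod.smul_snd] at hx
    have hA' : A = (1 / d) • Pj := hA
    have hp1 : ∀ i, ((B i)ᴴ * B i).PosSemidef := fun i =>
      Matrix.posSemidef_conjTranspose_mul_self _
    have := h κ (fun i => (d * w i) • ((B i)ᴴ * B i))
      (fun i => psd_smul (hp1 i) (mul_nonneg hd.le (hw i))) ?_
    · refine lt_of_le_of_lt (le_of_eq ?_) this
      simp only
      rw [← hx.2, Finset.mul_sum]
      refine Finset.sum_congr rfl fun i _ => ?_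
      rw [hhom _ _ (mul_nonneg hd.le (hw i)) (hp1 i), ← hBz i, smul_eq_mul, mul_assoc]
    · have h2 : ∑ i, w i • ((B i)ᴴ * B i) = (1 / d) • Pj := by
        rw [← hA', ← hx.1]
        refine Finset.sum_congr rfl fun i _ => ?_
        rw [← hBz i]
      simp only [mul_smul]
      rw [← Finset.smul_sum, h2, smul_smul, mul_one_div_cancel hd.ne', one_smul]
  by_cases hTe : T.Nonempty
  · obtain ⟨t, ht, htmax⟩ := hT.exists_isMaxOn hTe continuousOn_id
    refine ⟨d * t, hlt t ht, fun κ _ P hP hsum => ?_⟩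
    have := htmax (hfam κ P hP hsum)
    simp only [id, Set.mem_ofPred_eq] at this
    rw [div_le_iff₀ hd] at this
    linarith
  · refine ⟨Qs - 1, by linarith, fun κ _ P hP hsum => ?_⟩
    exact absurd ⟨_, hfam κ P hP hsum⟩ hTe

end

section
variable {ι : Type*} [Fintype ι] [DecidableEq ι]

theorem psd_spw {A : Matrix ι ι ℂ} (hA : A.PosSemidef) : ∃ (U : Matrix ι ι ℂ) (l : ι → ℝ)
    (e : ι → Bool), Uᴴ * U = 1 ∧ (∀ p : ℝ, p ≠ 0 → Matrix.rpowH A p = spw U l (fun i => e i = true) p)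
      ∧ A = spw U l (fun i => e i = true) 1 := by
  classical
  have hkey : ∀ p : ℝ, p ≠ 0 → ∀ i, ((hA.1.eigenvalues i ^ p : ℝ) : ℂ) =
      if decide (hA.1.eigenvalues i ≠ 0) = true then
        Complex.exp ((p : ℂ) * (Real.log (hA.1.eigenvalues i) : ℝ)) else 0 := by
    intro p hp i
    by_cases h0 : hA.1.eigenvalues i = 0
    · simp [h0, Real.zero_rpow hp]
    · have hpos : 0 < hA.1.eigenvalues i := lt_of_le_of_ne (hA.eigenvalues_nonneg i) (Ne.symm h0)
      rw [if_pos (by simpa using h0), Real.rpow_def_of_pos hpos, mul_comm]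
      push_cast; rfl
  refine ⟨(hA.1.eigenvectorUnitary : Matrix ι ι ℂ), fun i => Real.log (hA.1.eigenvalues i),
    fun i => decide (hA.1.eigenvalues i ≠ 0), ?_, ?_, ?_⟩
  · exact Unitary.coe_star_mul_self _
  · intro p hp
    rw [Matrix.rpowH, dif_pos hA.1]
    unfold spw
    simp only [hkey p hp]
    rfl
  · conv_lhs => rw [hA.1.spectral_theorem]
    rw [Unitary.conjStarAlgAut_apply]
    unfold spw
    have := hkey 1 one_ne_zero
    simp only [Real.rpow_one, Complex.ofReal_one] at this
    simp only [← this]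
    rfl

/-- The positively homogeneous function appearing in the classical Renyi sum. -/
def gfun (ρ S1 : Matrix ι ι ℂ) (α : ℝ) (P : Matrix ι ι ℂ) : ℝ :=
  retr (ρ * P) ^ α * retr (S1 * P) ^ (1 - α)

theorem retr_mul_comm (A B : Matrix ι ι ℂ) : retr (A * B) = retr (B * A) := by
  unfold retr; rw [Matrix.trace_mul_comm]

theorem trace_mul_psd {A B : Matrix ι ι ℂ} (hA : A.PosSemidef) (hB : B.PosSemidef) :
    (A * B).trace = (retr (A * B) : ℂ) := by
  obtain ⟨C, rfl⟩ := psd_factor hA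
  have h := psd_trace_eq (hB.mul_mul_conjTranspose_same C)
  have e : (Cᴴ * C * B).trace = (C * B * Cᴴ).trace := by
    rw [Matrix.mul_assoc, Matrix.trace_mul_comm]
  unfold retr at *
  rw [e]; exact h

theorem powfam_psd {S : ℂ → Matrix ι ι ℂ} (hS : PowFam S) (r : ℝ) : (S r).PosSemidef := by
  have : S r = (S ((r / 2 : ℝ) : ℂ))ᴴ * S ((r / 2 : ℝ) : ℂ) := by
    rw [hS.star, Complex.conj_ofReal, hS.mul, ← Complex.ofReal_add, add_halves]
  rw [this]
  exact Matrix.posSemidef_conjTranspose_mul_self _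

theorem powfam_tr_pos {S : ℂ → Matrix ι ι ℂ} (hS : PowFam S) (hS0 : S 0 = 1)
    {P : Matrix ι ι ℂ} (hP : P.PosSemidef) (h : retr (S 1 * P) ≤ 0) : P = 0 := by
  have h1 : (S 1).PosSemidef := by simpa using powfam_psd hS 1
  have h2 := psd_mul_zero_of_trace hP h1 h
  calc P = P * S 1 * S (-1) := by rw [Matrix.mul_assoc, hS.mul]; simp [hS0]
    _ = 0 := by rw [h2, Matrix.zero_mul]

theorem core_strict (ρ : Matrix ι ι ℂ) (hρ : ρ.PosSemidef)
    (S Xp : ℂ → Matrix ι ι ℂ) (hS : PowFam S) (hX : PowFam Xp) (hS0 : S 0 = 1)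
    (α s : ℝ) (hα : 1 / 2 < α) (hα1 : α ≠ 1) (hs : α * s = α - 1)
    (hX1 : Xp 1 = S (((-s / 2 : ℝ)) : ℂ) * ρ * S (((-s / 2 : ℝ)) : ℂ))
    (Pj : Matrix ι ι ℂ) (hPj : (1 - Pj).PosSemidef) (hρj : ρ * Pj = ρ)
    (hnc : ρ * S 1 ≠ S 1 * ρ) (Qs : ℝ) (hQs : (Xp α).trace = Qs)
    {κ : Type*} [Fintype κ] (P : κ → Matrix ι ι ℂ) (hP : ∀ i, (P i).PosSemidef)
    (hsum : ∑ i, P i = Pj) :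
    (1 < α → ∑ i, gfun ρ (S 1) α (P i) < Qs) ∧ (α < 1 → Qs < ∑ i, gfun ρ (S 1) α (P i)) := by
  classical
  have hα0 : 0 < α := by linarith
  have hS1 : (S 1).PosSemidef := by simpa using powfam_psd hS 1
  by_contra hcon
  have hcase : (1 < α ∧ Qs ≤ ∑ i, gfun ρ (S 1) α (P i)) ∨
      (α < 1 ∧ ∑ i, gfun ρ (S 1) α (P i) ≤ Qs) := by
    by_contra h2
    push Not at h2
    exact hcon ⟨h2.1, h2.2⟩
  set p : κ → ℝ := fun i => retr (ρ * P i) with hp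
  set q : κ → ℝ := fun i => retr (S 1 * P i) with hq
  have hp0 : ∀ i, 0 ≤ p i := fun i => psd_trace_mul_nonneg hρ (hP i)
  have hq0 : ∀ i, 0 ≤ q i := fun i => psd_trace_mul_nonneg hS1 (hP i)
  have hzero : ∀ i, ¬ 0 < p i → ρ * P i = 0 := fun i hi =>
    psd_mul_zero_of_trace hρ (hP i) (by rw [retr_mul_comm]; exact not_lt.1 hi)
  have hgz : ∀ i, ¬ 0 < p i → gfun ρ (S 1) α (P i) = 0 := fun i hi => by
    unfold gfun
    rw [hzero i hi]
    simp [retr, Real.zero_rpow hα0.ne']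
  have hqpos : ∀ i, 0 < p i → 0 < q i := fun i hi => by
    by_contra hn
    have := powfam_tr_pos hS hS0 (hP i) (not_lt.1 hn)
    simp [hp, this, retr] at hi
  have hsplit : ∀ {M : Type _} [AddCommMonoid M] (f : κ → M), ∑ i, f i =
      ∑ i : {i // 0 < p i}, f i + ∑ i : {i // ¬ 0 < p i}, f i := fun f =>
    (Fintype.sum_subtype_add_sum_subtype _ f).symm
  have hsumE : ∑ i : {i // 0 < p i}, P i = Pj - ∑ i : {i // ¬ 0 < p i}, P i := by
    rw [← hsum, hsplit P, add_sub_cancel_right]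
  have hsumg : ∑ i, gfun ρ (S 1) α (P i) = ∑ i : {i // 0 < p i}, gfun ρ (S 1) α (P i) := by
    rw [← Fintype.sum_subtype_add_sum_subtype (fun i => 0 < p i) (fun i => gfun ρ (S 1) α (P i))]
    have hz : ∑ i : {i // ¬ 0 < p i}, gfun ρ (S 1) α (P i) = 0 :=
      Finset.sum_eq_zero fun i _ => hgz i i.2
    rw [hz, add_zero]
  apply hnc
  refine core_commute (κ := {i // 0 < p i}) ρ hρ S Xp hS hX hS0 α s hα hα1 hs hX1
    (fun i => P i) (fun i => hP i) ?_ ?_ (fun i => p i) (fun i => q i)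
    (fun i => α * Real.log (p i / q i)) (fun i => trace_mul_psd hρ (hP i))
    (fun i => trace_mul_psd hS1 (hP i)) (∑ i, gfun ρ (S 1) α (P i)) Qs ?_ ?_ hQs ?_ hcase
  · rw [hsumE, ← sub_add]
    exact hPj.add (Matrix.posSemidef_sum _ fun i _ => hP i)
  · have hz : ∑ i : {i // ¬ 0 < p i}, ρ * P i = 0 := Finset.sum_eq_zero fun i _ => hzero i i.2
    rw [hsumE, Matrix.mul_sub, hρj, Finset.mul_sum, hz, sub_zero]
  · rw [hsumg]
    refine Finset.sum_congr rfl fun i _ => ?_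
    have h1 := i.2
    have h2 := hqpos i i.2
    change _ = p i ^ α * q i ^ (1 - α)
    rw [Real.rpow_def_of_pos h1, Real.rpow_def_of_pos h2, Real.log_div h1.ne' h2.ne']
    conv_lhs => rw [← Real.exp_log h1]
    rw [← Real.exp_add, ← Real.exp_add, Real.exp_log h1]
    congr 1
    linear_combination (Real.log (p i) - Real.log (q i)) * hs
  · rw [hsumg]
    refine Finset.sum_congr rfl fun i _ => ?_
    have h1 := i.2
    have h2 := hqpos i i.2
    change _ = p i ^ α * q i ^ (1 - α)
    rw [Real.rpow_def_of_pos h1, Real.rpow_def_of_pos h2, Real.log_div h1.ne' h2.ne']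
    conv_lhs => rw [← Real.exp_log h2]
    rw [← Real.exp_add, ← Real.exp_add, Real.exp_log h2]
    congr 1
    ring
  · exact Finset.sum_nonneg fun i _ => mul_nonneg (Real.rpow_nonneg (hp0 i) _)
      (Real.rpow_nonneg (hq0 i) _)

theorem gfun_cont (ρ : Matrix ι ι ℂ) (S : ℂ → Matrix ι ι ℂ) (hS : PowFam S) (hS0 : S 0 = 1)
    (α : ℝ) (hα : 0 < α) :
    ContinuousOn (gfun ρ (S 1) α) {R | R.PosSemidef ∧ R.trace = 1} := by
  have hc : ∀ A : Matrix ι ι ℂ, Continuous fun R : Matrix ι ι ℂ => retr (A * R) := fun A =>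
    Complex.continuous_re.comp (by fun_prop)
  unfold gfun
  refine ContinuousOn.mul ?_ ?_
  · exact ((hc ρ).rpow_const fun _ => Or.inr hα.le).continuousOn
  · refine (hc (S 1)).continuousOn.rpow_const ?_
    intro R hR
    left
    intro h0
    have := powfam_tr_pos hS hS0 hR.1 h0.le
    have h1 := hR.2
    rw [this] at h1
    simp at h1

theorem gfun_hom (ρ S1 : Matrix ι ι ℂ) (hρ : ρ.PosSemidef) (hS1 : S1.PosSemidef)
    (α : ℝ) (hα : 0 < α) (c : ℝ) (R : Matrix ι ι ℂ) (hc : 0 ≤ c) (hR : R.PosSemidef) :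
    gfun ρ S1 α (c • R) = c * gfun ρ S1 α R := by
  unfold gfun
  rw [Matrix.mul_smul, Matrix.mul_smul, retr_smul, retr_smul]
  rcases hc.eq_or_lt with rfl | hc
  · simp [Real.zero_rpow hα.ne']
  · rw [Real.mul_rpow hc.le (psd_trace_mul_nonneg hρ hR),
      Real.mul_rpow hc.le (psd_trace_mul_nonneg hS1 hR)]
    have : c ^ α * c ^ (1 - α) = c := by
      rw [← Real.rpow_add hc]; simp
    linear_combination (retr (ρ * R) ^ α * retr (S1 * R) ^ (1 - α)) * this

end

/-- strict inequality between measured and sandwiched for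
non-commuting states. For density operators with `supp ρ ⊆ supp σ`, `ρσ ≠ σρ`,
and `α ∈ (1/2,1) ∪ (1,∞)`: `D_α^𝕄(ρ‖σ) < D_α^*(ρ‖σ)`. -/
theorem measured_lt_sandwiched_of_not_commute
    {ι : Type*} [Fintype ι] [DecidableEq ι]
    (ρ σ : Matrix ι ι ℂ)
    (hρ : ρ.PosSemidef) (hρtr : ρ.trace = 1)
    (hσ : σ.PosSemidef) (hσtr : σ.trace = 1)
    (hsupp : ∀ v : ι → ℂ, σ.mulVec v = 0 → ρ.mulVec v = 0)
    (hcomm : ρ * σ ≠ σ * ρ)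
    (α : ℝ) (hα : (1 / 2 < α ∧ α < 1) ∨ 1 < α) :
    measuredRenyiDiv α ρ σ < ((sandwichedRenyiDiv α ρ σ : ℝ) : EReal) := by
  classical
  have hα0 : 0 < α := by rcases hα with h | h <;> linarith [h]
  have hαh : 1 / 2 < α := by rcases hα with h | h <;> linarith [h]
  have hα1 : α ≠ 1 := by
    rcases hα with h | h
    · exact h.2.ne
    · exact h.ne'
  obtain ⟨U, l, e, hU, hpow, hσ1⟩ := psd_spw hσ
  set C := spw U l (fun i => e i = true) with hCdef
  set S := spw U l (fun _ => True) with hSdef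
  have hC : PowFam C := spw_powFam U hU l _
  have hS : PowFam S := spw_powFam U hU l _
  have hU' : U * Uᴴ = 1 := mul_eq_one_comm.1 hU
  have hS0 : S 0 = 1 := by
    simp [hSdef, spw, hU']
  have hdm : ∀ D D' : Matrix ι ι ℂ, U * D * Uᴴ * (U * D' * Uᴴ) = U * (D * D') * Uᴴ := by
    intro D D'
    calc _ = U * D * (Uᴴ * U) * D' * Uᴴ := by simp only [Matrix.mul_assoc]
      _ = _ := by rw [hU]; simp only [Matrix.mul_assoc, Matrix.one_mul]
  have hSC : ∀ z, S z * C 0 = C z := by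
    intro z
    simp only [hSdef, hCdef, spw]
    rw [hdm, Matrix.diagonal_mul_diagonal]
    congr 3
    funext i
    by_cases hi : e i = true <;> simp [hi]
  have hCS : ∀ z, C 0 * S z = C z := by
    intro z
    simp only [hSdef, hCdef, spw]
    rw [hdm, Matrix.diagonal_mul_diagonal]
    congr 3
    funext i
    by_cases hi : e i = true <;> simp [hi]
  have hC0H : (C 0)ᴴ = C 0 := by rw [hC.star]; simp
  have hC00 : C 0 * C 0 = C 0 := by rw [hC.mul, zero_add]
  have hS1 : (S 1).PosSemidef := by simpa using powfam_psd hS 1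
  have hρC : ρ * C 0 = ρ := by
    have h1 : σ * (1 - C 0) = 0 := by
      rw [hσ1, Matrix.mul_sub, Matrix.mul_one, hC.mul, add_zero, sub_self]
    have h2 : ρ * (1 - C 0) = 0 := by
      rw [← Matrix.mulVec_injective.eq_iff]
      funext v
      rw [← Matrix.mulVec_mulVec, Matrix.zero_mulVec]
      apply hsupp
      rw [Matrix.mulVec_mulVec, h1, Matrix.zero_mulVec]
    rw [Matrix.mul_sub, Matrix.mul_one, sub_eq_zero] at h2
    exact h2.symm
  have hCρ : C 0 * ρ = ρ := by
    have := congrArg Matrix.conjTranspose hρC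
    rwa [Matrix.conjTranspose_mul, hC0H, hρ.1.eq] at this
  have hρ0 : ρ ≠ 0 := by
    rintro rfl
    simp at hρtr
  have hC0psd : (C 0).PosSemidef := by simpa using powfam_psd hC 0
  have hd : 0 < retr (C 0) := by
    refine lt_of_le_of_ne (retr_nonneg hC0psd) fun h => hρ0 ?_
    rw [← hρC, psd_eq_zero_of_retr hC0psd h.symm, Matrix.mul_zero]
  have hPj : (1 - C 0).PosSemidef := by
    have : (1 - C 0)ᴴ * (1 - C 0) = 1 - C 0 := by
      rw [Matrix.conjTranspose_sub, hC0H, Matrix.conjTranspose_one, Matrix.sub_mul, Matrix.mul_sub,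
        Matrix.mul_sub, hC00]
      simp
    rw [← this]
    exact Matrix.posSemidef_conjTranspose_mul_self _
  set s : ℝ := (α - 1) / α with hsdef
  have hs : α * s = α - 1 := by rw [hsdef]; field_simp
  have hr : (1 - α) / (2 * α) = -s / 2 := by rw [hsdef]; field_simp; ring
  have hr0 : -s / 2 ≠ 0 := by
    have : s ≠ 0 := by
      intro h0
      rw [h0, mul_zero] at hs
      exact hα1 (by linarith)
    simpa using this
  set X := S ((-s / 2 : ℝ) : ℂ) * ρ * S ((-s / 2 : ℝ) : ℂ) with hXdef
  have hXeq : Matrix.rpowH σ ((1 - α) / (2 * α)) * ρ * Matrix.rpowH σ ((1 - α) / (2 * α)) = X := by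
    rw [hr, hpow _ hr0]
    calc C ((-s / 2 : ℝ) : ℂ) * ρ * C ((-s / 2 : ℝ) : ℂ)
        = S ((-s / 2 : ℝ) : ℂ) * C 0 * ρ * (C 0 * S ((-s / 2 : ℝ) : ℂ)) := by rw [hSC, hCS]
      _ = S ((-s / 2 : ℝ) : ℂ) * (C 0 * ρ * C 0) * S ((-s / 2 : ℝ) : ℂ) := by
          simp only [Matrix.mul_assoc]
      _ = X := by rw [hCρ, hρC]
  have hXpsd : X.PosSemidef := by
    have := hρ.mul_mul_conjTranspose_same (S ((-s / 2 : ℝ) : ℂ))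
    rwa [hS.star, Complex.conj_ofReal] at this
  obtain ⟨V, m, f, hV, hXpow, hX1⟩ := psd_spw hXpsd
  set Xp := spw V m (fun i => f i = true) with hXpdef
  have hXp : PowFam Xp := spw_powFam V hV m _
  set Qs := retr (Xp α) with hQs
  have hsand : sandwichedRenyiDiv α ρ σ = (α - 1)⁻¹ * Real.log Qs := by
    unfold sandwichedRenyiDiv
    rw [hXeq, hXpow α hα0.ne']
  have hnc : ρ * S 1 ≠ S 1 * ρ := by
    intro h
    apply hcomm
    calc ρ * σ = ρ * S 1 * C 0 := by rw [Matrix.mul_assoc, hSC, ← hσ1]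
      _ = S 1 * (ρ * C 0) := by rw [h, Matrix.mul_assoc]
      _ = S 1 * (C 0 * ρ) := by rw [hρC, hCρ]
      _ = σ * ρ := by rw [← Matrix.mul_assoc, hSC, ← hσ1]
  have hQspos : 0 < Qs := by
    refine lt_of_le_of_ne (retr_nonneg (powfam_psd hXp α)) fun h => hρ0 ?_
    have h0 := psd_eq_zero_of_retr (powfam_psd hXp α) h.symm
    have h1 : X = 0 := by
      rw [hX1]
      calc Xp 1 = Xp α * Xp (1 - α) := by rw [hXp.mul]; congr 1; ring
        _ = 0 := by rw [h0, Matrix.zero_mul]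
    have h2 : S ((-s / 2 : ℝ) : ℂ) * S ((s / 2 : ℝ) : ℂ) = 1 := by
      rw [hS.mul, ← Complex.ofReal_add, show -s / 2 + s / 2 = 0 by ring, Complex.ofReal_zero, hS0]
    have h2' : S ((s / 2 : ℝ) : ℂ) * S ((-s / 2 : ℝ) : ℂ) = 1 := by
      rw [hS.mul, ← Complex.ofReal_add, show s / 2 + -s / 2 = 0 by ring, Complex.ofReal_zero, hS0]
    calc ρ = S ((s / 2 : ℝ) : ℂ) * X * S ((s / 2 : ℝ) : ℂ) := by
          rw [hXdef, ← Matrix.mul_assoc, ← Matrix.mul_assoc, h2', Matrix.one_mul, Matrix.mul_assoc,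
            h2, Matrix.mul_one]
      _ = 0 := by rw [h1, Matrix.mul_zero, Matrix.zero_mul]
  have hcore : ∀ (κ : Type) [Fintype κ] (P : κ → Matrix ι ι ℂ), (∀ i, (P i).PosSemidef) →
      ∑ i, P i = C 0 → (1 < α → ∑ i, gfun ρ (S 1) α (P i) < Qs) ∧
        (α < 1 → Qs < ∑ i, gfun ρ (S 1) α (P i)) := fun κ _ P hP hsum =>
    core_strict ρ hρ S Xp hS hXp hS0 α s hαh hα1 hs hX1.symm (C 0) hPj hρC hnc Qs
      (psd_trace_eq (powfam_psd hXp α)) P hP hsum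
  have hgpos : ∀ (κ : Type) [Fintype κ] (P : κ → Matrix ι ι ℂ), (∀ i, (P i).PosSemidef) →
      ∑ i, P i = C 0 → 0 < ∑ i, gfun ρ (S 1) α (P i) := by
    intro κ _ P hP hsum
    have h1 : ∑ i, retr (ρ * P i) = 1 := by
      have : ρ.trace = ∑ i, (ρ * P i).trace := by
        rw [← Matrix.trace_sum, ← Finset.mul_sum, hsum, hρC]
      have h2 := congrArg Complex.re this
      rw [hρtr, Complex.re_sum] at h2
      simpa [retr] using h2.symm
    obtain ⟨i, -, hi⟩ := Finset.exists_lt_of_sum_lt (s := Finset.univ) (f := fun _ : κ => (0 : ℝ))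
      (g := fun i => retr (ρ * P i)) (by rw [h1]; simp)
    refine Finset.sum_pos' (fun j _ => mul_nonneg
      (Real.rpow_nonneg (psd_trace_mul_nonneg hρ (hP j)) _)
      (Real.rpow_nonneg (psd_trace_mul_nonneg hS1 (hP j)) _)) ⟨i, Finset.mem_univ i, ?_⟩
    have hq : 0 < retr (S 1 * P i) := by
      by_contra hn
      have := powfam_tr_pos hS hS0 (hP i) (not_lt.1 hn)
      simp [this, retr] at hi
    exact mul_pos (Real.rpow_pos_of_pos hi _) (Real.rpow_pos_of_pos hq _)
  -- uniform gap
  have hgap : ∃ B : ℝ, B < (α - 1)⁻¹ * Real.log Qs ∧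
      ∀ (κ : Type) [Fintype κ] (P : κ → Matrix ι ι ℂ), (∀ i, (P i).PosSemidef) →
      ∑ i, P i = C 0 → (α - 1)⁻¹ * Real.log (∑ i, gfun ρ (S 1) α (P i)) ≤ B := by
    rcases hα with hα | hα
    · obtain ⟨c, hc, hcb⟩ := uniform_bound (fun P => -gfun ρ (S 1) α P)
        (gfun_cont ρ S hS hS0 α hα0).neg
        (fun c R h0 hR => by simp only [gfun_hom ρ (S 1) hρ hS1 α hα0 c R h0 hR]; ring) (C 0) hd (-Qs)
        (fun κ _ P hP hsum => by
          have := (hcore κ P hP hsum).2 hα.2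
          simp only [Finset.sum_neg_distrib]; linarith)
      have hneg : (α - 1)⁻¹ < 0 := inv_lt_zero.2 (by linarith [hα.2])
      refine ⟨(α - 1)⁻¹ * Real.log (-c), ?_, fun κ _ P hP hsum => ?_⟩
      · exact mul_lt_mul_of_neg_left (Real.log_lt_log hQspos (by linarith)) hneg
      · have := hcb κ P hP hsum
        simp only [Finset.sum_neg_distrib] at this
        exact mul_le_mul_of_nonpos_left (Real.log_le_log (by linarith) (by linarith)) hneg.le
    · obtain ⟨c, hc, hcb⟩ := uniform_bound (gfun ρ (S 1) α)
        (gfun_cont ρ S hS hS0 α hα0)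
        (fun c R h0 hR => gfun_hom ρ (S 1) hρ hS1 α hα0 c R h0 hR) (C 0) hd Qs
        (fun κ _ P hP hsum => (hcore κ P hP hsum).1 hα)
      have hpos : 0 < (α - 1)⁻¹ := inv_pos.2 (by linarith)
      have hc0 : 0 < c := (hgpos Unit (fun _ => C 0) (fun _ => hC0psd) (by simp)).trans_le
        (hcb Unit (fun _ => C 0) (fun _ => hC0psd) (by simp))
      refine ⟨(α - 1)⁻¹ * Real.log c, ?_, fun κ _ P hP hsum => ?_⟩
      · exact mul_lt_mul_of_pos_left (Real.log_lt_log hc0 hc) hpos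
      · exact mul_le_mul_of_nonneg_left
          (Real.log_le_log (hgpos κ P hP hsum) (hcb κ P hP hsum)) hpos.le
  obtain ⟨B, hB, hbound⟩ := hgap
  rw [hsand]
  refine lt_of_le_of_lt ?_ (EReal.coe_lt_coe_iff.2 hB)
  unfold measuredRenyiDiv
  refine iSup_le fun k => iSup_le fun P => iSup_le fun hP => iSup_le fun hsum => ?_
  have hP' : ∀ i, (C 0 * P i * C 0).PosSemidef := fun i => by
    have := (hP i).mul_mul_conjTranspose_same (C 0)
    rwa [hC0H] at this
  have hp : ∀ i, retr (ρ * P i) = retr (ρ * (C 0 * P i * C 0)) := fun i => by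
    calc retr (ρ * P i) = retr ((C 0 * (ρ * C 0)) * P i) := by rw [hρC, hCρ]
      _ = retr (C 0 * (ρ * C 0 * P i)) := by simp only [Matrix.mul_assoc]
      _ = _ := by rw [retr_mul_comm]; simp only [Matrix.mul_assoc]
  have hq : ∀ i, retr (σ * P i) = retr (S 1 * (C 0 * P i * C 0)) := fun i => by
    calc retr (σ * P i) = retr ((C 0 * (S 1 * C 0)) * P i) := by
          rw [hSC, hC.mul, zero_add, ← hσ1]
      _ = retr (C 0 * (S 1 * C 0 * P i)) := by simp only [Matrix.mul_assoc]
      _ = _ := by rw [retr_mul_comm]; simp only [Matrix.mul_assoc]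
  have hsum' : ∑ i, C 0 * P i * C 0 = C 0 := by
    rw [← Finset.sum_mul, ← Finset.mul_sum, hsum, Matrix.mul_one, hC00]
  unfold renyiDivE
  rw [if_pos]
  · rw [EReal.coe_le_coe_iff]
    have := hbound (Fin k) (fun i => C 0 * P i * C 0) hP' hsum'
    unfold gfun at this
    simp only [hp, hq]
    exact this
  · right
    intro i hi
    simp only [hq] at hi
    have := powfam_tr_pos hS hS0 (hP' i) hi.le
    simp only [hp]
    simp [this, retr]

end
end

section
/- Let ρ and σ be density operators on a finite-dimensional complex Hilbert space with supp(ρ) ⊆ supp(σ), let r > 0, and let n ≥ 1 be an integer. Then for every operator Tⁿ on the n-fold tensor power with 0 ≤ Tⁿ ≤ 𝟙^{⊗n}, Tr[ρ^{⊗n} Tⁿ] > 0, and −(1/n) log Tr[σ^{⊗n} Tⁿ] ≥ r, one has −(1/n) log Tr[ρ^{⊗n} Tⁿ] ≥ sup_{α>1} ((α−1)/α)( r − D_α^*(ρ‖σ) ). -/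
open Matrix
open scoped ComplexOrder Kronecker

noncomputable section

/-- `n`-fold tensor (Kronecker) power of a matrix. -/
def tensorPow {ι : Type*} [Fintype ι] (A : Matrix ι ι ℂ) (n : ℕ) :
    Matrix (Fin n → ι) (Fin n → ι) ℂ :=
  Matrix.of fun v w => ∏ i, A (v i) (w i)

section Helpers

variable {κ : Type*} [Fintype κ] [DecidableEq κ]

open scoped MatrixOrder in
lemma exists_root (T : Matrix κ κ ℂ) (hT : T.PosSemidef) : ∃ Q : Matrix κ κ ℂ, T = Qᴴ * Q := by
  have h : 0 ≤ T := hT.nonneg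
  exact CStarAlgebra.nonneg_iff_eq_star_mul_self.mp h

lemma diag_amgm (M N : Matrix κ κ ℂ) (j : κ) :
    ‖(Mᴴ * N) j j‖ ≤ (((Mᴴ * M) j j).re + ((Nᴴ * N) j j).re) / 2 := by
  simp only [Matrix.mul_apply, Complex.re_sum, ← Finset.sum_add_distrib, Finset.sum_div]
  refine (norm_sum_le _ _).trans (Finset.sum_le_sum fun k _ => ?_)
  have h : ∀ z : ℂ, (star z * z).re = ‖z‖ ^ 2 := by
    intro z
    rw [Complex.star_def, ← Complex.normSq_eq_conj_mul_self, Complex.ofReal_re,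
      Complex.normSq_eq_norm_sq]
  simp only [Matrix.conjTranspose_apply, h, norm_mul, norm_star]
  nlinarith [sq_nonneg (‖M k j‖ - ‖N k j‖)]

lemma sandwich_eq (W Q : Matrix κ κ ℂ) (b c : κ → ℂ) :
    W * diagonal b * (Qᴴ * Q) * diagonal c * Wᴴ =
      (Q * diagonal (star b) * Wᴴ)ᴴ * (Q * diagonal c * Wᴴ) := by
  simp [Matrix.conjTranspose_mul, Matrix.diagonal_conjTranspose, Matrix.mul_assoc]

lemma sandwich_trace (W T : Matrix κ κ ℂ) (hW : Wᴴ * W = 1) (b : κ → ℂ) :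
    ∑ j, ((W * diagonal b * T * diagonal (star b) * Wᴴ) j j).re = ∑ i, ‖b i‖ ^ 2 * (T i i).re := by
  have : (W * diagonal b * T * diagonal (star b) * Wᴴ).trace
      = (diagonal b * T * diagonal (star b)).trace := by
    rw [Matrix.trace_mul_comm]
    simp only [← Matrix.mul_assoc, hW, Matrix.one_mul]
  have h2 := congrArg Complex.re this
  simp only [Matrix.trace, Complex.re_sum, Matrix.diag] at h2
  rw [h2]
  refine Finset.sum_congr rfl fun i _ => ?_
  rw [Matrix.mul_diagonal, Matrix.diagonal_mul]
  have : b i * T i i * star b i = ((‖b i‖ ^ 2 : ℝ) : ℂ) * T i i := by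
    rw [← Complex.normSq_eq_norm_sq, ← Complex.mul_conj]
    simp only [Pi.star_apply, Complex.star_def]; ring
  rw [this, Complex.re_ofReal_mul]

lemma sandwich_diag_le (W T : Matrix κ κ ℂ) (hW : W * Wᴴ = 1) (hT1 : (1 - T).PosSemidef)
    (b : κ → ℂ) (hb : ∀ i, ‖b i‖ ≤ 1) (j : κ) :
    ((W * diagonal b * T * diagonal (star b) * Wᴴ) j j).re ≤ 1 := by
  have h1 : ((W * diagonal b * (1 - T) * (W * diagonal b)ᴴ)).PosSemidef :=
    hT1.mul_mul_conjTranspose_same _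
  have h2 := (Complex.le_def.mp (h1.diag_nonneg (i := j))).1
  have e : W * diagonal b * (1 - T) * (W * diagonal b)ᴴ =
      W * diagonal (b * star b) * Wᴴ - W * diagonal b * T * diagonal (star b) * Wᴴ := by
    have : (diagonal (b * star b) : Matrix κ κ ℂ) = diagonal b * diagonal (star b) := by
      rw [Matrix.diagonal_mul_diagonal]; rfl
    rw [this, Matrix.conjTranspose_mul, Matrix.diagonal_conjTranspose]
    noncomm_ring
  rw [e, Matrix.sub_apply, Complex.sub_re, Complex.zero_re] at h2
  have h3 : ∀ c : κ → ℂ, (W * diagonal c * Wᴴ) j j = ∑ i, c i * ((‖W j i‖ ^ 2 : ℝ) : ℂ) := by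
    intro c
    rw [Matrix.mul_apply]
    refine Finset.sum_congr rfl fun i _ => ?_
    rw [Matrix.mul_diagonal, Matrix.conjTranspose_apply, ← Complex.normSq_eq_norm_sq,
      ← Complex.mul_conj, Complex.star_def]; ring
  have h4 := h3 (b * star b)
  have h5 := h3 (fun _ => 1)
  have h6 : (diagonal (fun _ => 1) : Matrix κ κ ℂ) = 1 := Matrix.diagonal_one
  rw [h6, Matrix.mul_one, hW, Matrix.one_apply_eq] at h5
  have h5' := congrArg Complex.re h5
  have h4' := congrArg Complex.re h4
  simp only [Complex.re_sum, Complex.re_mul_ofReal, one_mul, Complex.ofReal_re, Complex.one_re]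
    at h5' h4'
  have : ∑ x, ((b * star b) x).re * ‖W j x‖ ^ 2 ≤ ∑ x, ‖W j x‖ ^ 2 := by
    refine Finset.sum_le_sum fun i _ => ?_
    have : ((b * star b) i).re ≤ 1 := by
      simp only [Pi.mul_apply, Pi.star_apply, Complex.star_def]
      rw [Complex.mul_conj, Complex.normSq_eq_norm_sq, Complex.ofReal_re]
      nlinarith [hb i, norm_nonneg (b i)]
    nlinarith [sq_nonneg ‖W j i‖]
  linarith

lemma trace_diag_mul (a : κ → ℂ) (G : Matrix κ κ ℂ) :
    (diagonal a * G).trace = ∑ j, a j * G j j := by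
  simp [Matrix.trace, Matrix.diagonal_mul]

lemma bound_zero (W T : Matrix κ κ ℂ) (hW : Wᴴ * W = 1) (hT : T.PosSemidef)
    (a b : κ → ℂ) (ha : ∀ i, ‖a i‖ ≤ 1) :
    ‖(diagonal a * (W * diagonal b * T * diagonal b * Wᴴ)).trace‖ ≤
      ∑ i, ‖b i‖ ^ 2 * (T i i).re := by
  obtain ⟨Q, rfl⟩ := exists_root T hT
  have s1 := sandwich_trace W (Qᴴ * Q) hW b
  have s2 := sandwich_trace W (Qᴴ * Q) hW (star b)
  rw [sandwich_eq] at s1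
  rw [star_star, sandwich_eq] at s2
  simp only [Pi.star_apply, norm_star] at s2
  rw [trace_diag_mul, sandwich_eq]
  refine (norm_sum_le _ _).trans ?_
  have : ∀ j ∈ Finset.univ, ‖a j * ((Q * diagonal (star b) * Wᴴ)ᴴ * (Q * diagonal b * Wᴴ)) j j‖ ≤
      (((Q * diagonal (star b) * Wᴴ)ᴴ * (Q * diagonal (star b) * Wᴴ)) j j).re / 2 +
      (((Q * diagonal b * Wᴴ)ᴴ * (Q * diagonal b * Wᴴ)) j j).re / 2 := by
    intro j _
    rw [norm_mul]
    have := diag_amgm (Q * diagonal (star b) * Wᴴ) (Q * diagonal b * Wᴴ) j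
    nlinarith [ha j, norm_nonneg (a j),
      norm_nonneg (((Q * diagonal (star b) * Wᴴ)ᴴ * (Q * diagonal b * Wᴴ)) j j)]
  refine (Finset.sum_le_sum this).trans ?_
  rw [Finset.sum_add_distrib, ← Finset.sum_div, ← Finset.sum_div, s1]
  rw [star_star] at s2
  rw [s2]; linarith

lemma bound_one (W T : Matrix κ κ ℂ) (hW : W * Wᴴ = 1) (hT : T.PosSemidef)
    (hT1 : (1 - T).PosSemidef) (a b : κ → ℂ) (hb : ∀ i, ‖b i‖ ≤ 1) :
    ‖(diagonal a * (W * diagonal b * T * diagonal b * Wᴴ)).trace‖ ≤ ∑ i, ‖a i‖ := by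
  obtain ⟨Q, rfl⟩ := exists_root T hT
  rw [trace_diag_mul, sandwich_eq]
  refine (norm_sum_le _ _).trans (Finset.sum_le_sum fun j _ => ?_)
  have s1 := sandwich_diag_le W (Qᴴ * Q) hW hT1 b hb j
  have s2 := sandwich_diag_le W (Qᴴ * Q) hW hT1 (star b) (by simpa using hb) j
  rw [sandwich_eq] at s1
  rw [star_star, sandwich_eq, star_star] at s2
  have := diag_amgm (Q * diagonal (star b) * Wᴴ) (Q * diagonal b * Wᴴ) j
  rw [norm_mul]
  nlinarith [norm_nonneg (a j)]

/-- `x ^ w` as an entire function of `w`, zero when `x = 0`. -/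
def cp (x : ℝ) (w : ℂ) : ℂ := if x = 0 then 0 else Complex.exp (w * (Real.log x : ℂ))

lemma cp_diff (x : ℝ) : Differentiable ℂ (cp x) := by
  unfold cp
  split_ifs
  · exact differentiable_const _
  · fun_prop

lemma cp_ofReal (x : ℝ) (hx : 0 ≤ x) (t : ℝ) (ht : t ≠ 0) : cp x t = ((x ^ t : ℝ) : ℂ) := by
  unfold cp
  split_ifs with h
  · simp [h, Real.zero_rpow ht]
  · rw [Real.rpow_def_of_pos (lt_of_le_of_ne hx (Ne.symm h)), mul_comm]; push_cast; rfl

lemma norm_cp (x : ℝ) (hx : x ≠ 0) (w : ℂ) : ‖cp x w‖ = Real.exp (w.re * Real.log x) := by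
  simp [cp, hx, Complex.norm_exp]

lemma norm_cp_zero (x : ℝ) (w : ℂ) (hw : w.re = 0) : ‖cp x w‖ ≤ 1 := by
  by_cases h : x = 0
  · simp [cp, h]
  · simp [norm_cp x h, hw]

lemma norm_cp_pos (x : ℝ) (hx : 0 ≤ x) (w : ℂ) (hw : w.re ≠ 0) : ‖cp x w‖ = x ^ w.re := by
  by_cases h : x = 0
  · simp [cp, h, Real.zero_rpow hw]
  · rw [norm_cp x h, Real.rpow_def_of_pos (lt_of_le_of_ne hx (Ne.symm h)), mul_comm]

lemma norm_cp_le (x : ℝ) (w : ℂ) (c : ℝ) (hw : |w.re| ≤ c) :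
    ‖cp x w‖ ≤ Real.exp (c * |Real.log x|) := by
  by_cases h : x = 0
  · simp [cp, h]
  · rw [norm_cp x h]
    apply Real.exp_le_exp.mpr
    calc _ ≤ |w.re * Real.log x| := le_abs_self _
      _ = |w.re| * |Real.log x| := abs_mul _ _
      _ ≤ _ := by gcongr

lemma three_lines (W T : Matrix κ κ ℂ) (hW : Wᴴ * W = 1) (hT : T.PosSemidef)
    (hT1 : (1 - T).PosSemidef) (x s : κ → ℝ) (hx : ∀ i, 0 ≤ x i) (hs : ∀ i, 0 ≤ s i)
    (α : ℝ) (hα : 1 < α) :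
    ‖(diagonal (fun i => (x i : ℂ)) *
      (W * diagonal (fun i => ((s i ^ ((α - 1) / (2 * α)) : ℝ) : ℂ)) * T *
        diagonal (fun i => ((s i ^ ((α - 1) / (2 * α)) : ℝ) : ℂ)) * Wᴴ)).trace‖ ≤
      (∑ i, s i * (T i i).re) ^ (1 - 1 / α) * (∑ i, x i ^ α) ^ (1 / α) := by
  have hW' : W * Wᴴ = 1 := mul_eq_one_comm.mp hW
  have hα0 : 0 < α := by linarith
  set a : ℂ → κ → ℂ := fun z i => cp (x i) (α * z) with ha
  set b : ℂ → κ → ℂ := fun z i => cp (s i) ((1 - z) / 2) with hb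
  set f : ℂ → ℂ := fun z =>
    (diagonal (a z) * (W * diagonal (b z) * T * diagonal (b z) * Wᴴ)).trace with hf
  have hfe : ∀ z, f z = ∑ j, a z j * ∑ k, (∑ i, W j i * b z i * T i k) * b z k * star (W j k) := by
    intro z
    simp only [hf, trace_diag_mul]
    refine Finset.sum_congr rfl fun j _ => ?_
    congr 1
    rw [Matrix.mul_apply]
    refine Finset.sum_congr rfl fun k _ => ?_
    rw [Matrix.mul_diagonal, Matrix.mul_apply, Matrix.conjTranspose_apply]
    simp only [Matrix.mul_diagonal]
  have hfd : Differentiable ℂ f := by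
    have hA : ∀ j, Differentiable ℂ (fun z => a z j) := fun j =>
      (cp_diff (x j)).comp (by fun_prop)
    have hB : ∀ j, Differentiable ℂ (fun z => b z j) := fun j =>
      (cp_diff (s j)).comp (by fun_prop)
    rw [show f = _ from funext hfe]
    fun_prop
  have hbd : BddAbove ((norm ∘ f) '' Complex.HadamardThreeLines.verticalClosedStrip 0 1) := by
    set A : κ → ℝ := fun i => Real.exp (α * |Real.log (x i)|)
    set B : κ → ℝ := fun i => Real.exp (1 * |Real.log (s i)|)
    refine ⟨∑ j, A j * ∑ k, (∑ i, ‖W j i‖ * B i * ‖T i k‖) * B k * ‖W j k‖, ?_⟩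
    rintro _ ⟨z, hz, rfl⟩
    have hz' : 0 ≤ z.re ∧ z.re ≤ 1 := hz
    have hA : ∀ j, ‖a z j‖ ≤ A j := fun j => norm_cp_le _ _ _ (by
      simp only [Complex.re_ofReal_mul]
      rw [abs_of_nonneg (by nlinarith)]; nlinarith)
    have hB : ∀ j, ‖b z j‖ ≤ B j := fun j => norm_cp_le _ _ _ (by
      have : ((1 - z) / 2).re = (1 - z.re) / 2 := by simp
      rw [this, abs_le]; constructor <;> linarith)
    simp only [Function.comp, hfe]
    refine (norm_sum_le _ _).trans (Finset.sum_le_sum fun j _ => ?_)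
    rw [norm_mul]
    refine mul_le_mul (hA j) ?_ (norm_nonneg _) (Real.exp_pos _).le
    refine (norm_sum_le _ _).trans (Finset.sum_le_sum fun k _ => ?_)
    rw [norm_mul, norm_mul, norm_star]
    refine mul_le_mul_of_nonneg_right ?_ (norm_nonneg _)
    refine mul_le_mul ?_ (hB k) (norm_nonneg _) (Finset.sum_nonneg fun i _ => by positivity)
    refine (norm_sum_le _ _).trans (Finset.sum_le_sum fun i _ => ?_)
    rw [norm_mul, norm_mul]
    gcongr
    exact hB i
  have h0 : ∀ z ∈ Complex.re ⁻¹' {(0 : ℝ)}, ‖f z‖ ≤ ∑ i, s i * (T i i).re := by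
    intro z hz
    have hz : z.re = 0 := hz
    refine (bound_zero W T hW hT (a z) (b z) fun i => norm_cp_zero _ _ (by simp [hz])).trans
      (le_of_eq ?_)
    refine Finset.sum_congr rfl fun i _ => ?_
    have e : ((1 - z) / 2).re = 1 / 2 := by simp [hz]
    congr 1
    simp only [hb]
    rw [norm_cp_pos _ (hs i) _ (by rw [e]; norm_num), e, ← Real.rpow_natCast, ← Real.rpow_mul (hs i)]
    norm_num
  have h1 : ∀ z ∈ Complex.re ⁻¹' {(1 : ℝ)}, ‖f z‖ ≤ ∑ i, x i ^ α := by
    intro z hz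
    have hz : z.re = 1 := hz
    refine (bound_one W T hW' hT hT1 (a z) (b z) fun i => norm_cp_zero _ _ (by simp [hz])).trans
      (le_of_eq ?_)
    refine Finset.sum_congr rfl fun i _ => ?_
    have e : ((α : ℂ) * z).re = α := by simp [hz]
    simp only [ha]
    rw [norm_cp_pos _ (hx i) _ (by rw [e]; exact hα0.ne'), e]
  have hre : (((1 / α : ℝ) : ℂ)).re = 1 / α := Complex.ofReal_re _
  have key := Complex.HadamardThreeLines.norm_le_interp_of_mem_verticalClosedStrip₀₁' f
    (z := ((1 / α : ℝ) : ℂ)) (by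
      show _ ∈ Set.Icc (0 : ℝ) 1
      rw [hre]
      exact ⟨by positivity, by rw [div_le_one hα0]; linarith⟩) hfd.diffContOnCl hbd h0 h1
  rw [hre] at key
  have ea : a ((1 / α : ℝ) : ℂ) = fun i => (x i : ℂ) := by
    funext i
    simp only [ha]
    have : (α : ℂ) * ((1 / α : ℝ) : ℂ) = ((1 : ℝ) : ℂ) := by
      rw [← Complex.ofReal_mul]; congr 1; field_simp
    rw [this, cp_ofReal _ (hx i) _ one_ne_zero, Real.rpow_one]
  have eb : b ((1 / α : ℝ) : ℂ) = fun i => ((s i ^ ((α - 1) / (2 * α)) : ℝ) : ℂ) := by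
    funext i
    simp only [hb]
    have : (1 - ((1 / α : ℝ) : ℂ)) / 2 = (((α - 1) / (2 * α) : ℝ) : ℂ) := by
      rw [← Complex.ofReal_one, ← Complex.ofReal_sub, ← Complex.ofReal_ofNat,
        ← Complex.ofReal_div]; congr 1; field_simp
    rw [this, cp_ofReal _ (hs i) _ (by
      have : 0 < α - 1 := by linarith
      positivity)]
  simpa only [hf, ea, eb] using key

/-- Unitarily diagonalised version. -/
lemma three_lines' (U V T : Matrix κ κ ℂ) (hU : Uᴴ * U = 1) (hV : Vᴴ * V = 1) (hT : T.PosSemidef)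
    (hT1 : (1 - T).PosSemidef) (x s : κ → ℝ) (hx : ∀ i, 0 ≤ x i) (hs : ∀ i, 0 ≤ s i)
    (α : ℝ) (hα : 1 < α) (S : Matrix κ κ ℂ)
    (hS : S = V * diagonal (fun i => ((s i ^ ((α - 1) / (2 * α)) : ℝ) : ℂ)) * Vᴴ) :
    retr (S * (U * diagonal (fun i => (x i : ℂ)) * Uᴴ) * S * T) ≤
      retr (V * diagonal (fun i => (s i : ℂ)) * Vᴴ * T) ^ (1 - 1 / α) *
        (∑ i, x i ^ α) ^ (1 / α) := by
  have hU' : U * Uᴴ = 1 := mul_eq_one_comm.mp hU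
  have hV' : V * Vᴴ = 1 := mul_eq_one_comm.mp hV
  have key := three_lines (Uᴴ * V) (Vᴴ * T * V) (by
      rw [Matrix.conjTranspose_mul, Matrix.conjTranspose_conjTranspose, Matrix.mul_assoc,
        ← Matrix.mul_assoc U, hU', Matrix.one_mul, hV]) (hT.conjTranspose_mul_mul_same V) (by
      have := hT1.conjTranspose_mul_mul_same V
      rwa [Matrix.mul_sub, Matrix.sub_mul, Matrix.mul_one, hV] at this) x s hx hs α hα
  have e1 : ∑ i, s i * ((Vᴴ * T * V) i i).re =
      retr (V * diagonal (fun i => (s i : ℂ)) * Vᴴ * T) := by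
    have : (V * diagonal (fun i => (s i : ℂ)) * Vᴴ * T).trace =
        (diagonal (fun i => (s i : ℂ)) * (Vᴴ * T * V)).trace := by
      rw [Matrix.mul_assoc, Matrix.mul_assoc, Matrix.trace_mul_comm]
      simp only [Matrix.mul_assoc]
    rw [retr, this, trace_diag_mul, Complex.re_sum]
    simp only [Complex.re_ofReal_mul]
  rw [e1] at key
  refine le_trans ?_ key
  refine le_trans (le_of_eq ?_) (Complex.re_le_norm _)
  unfold retr
  congr 1
  set D := diagonal (fun i => (x i : ℂ))
  set E := diagonal (fun i => ((s i ^ ((α - 1) / (2 * α)) : ℝ) : ℂ))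
  have : D * (Uᴴ * V * E * (Vᴴ * T * V) * E * (Uᴴ * V)ᴴ) = (D * Uᴴ * S * T * S) * U := by
    rw [hS, Matrix.conjTranspose_mul, Matrix.conjTranspose_conjTranspose]
    simp only [Matrix.mul_assoc]
  rw [this]
  have : S * (U * D * Uᴴ) * S * T = S * (U * (D * Uᴴ * S * T)) := by
    simp only [Matrix.mul_assoc]
  rw [this, Matrix.trace_mul_comm S, Matrix.mul_assoc U, Matrix.trace_mul_comm U]

lemma tensorPow_mul (A B : Matrix κ κ ℂ) (n : ℕ) :
    tensorPow (A * B) n = tensorPow A n * tensorPow B n := by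
  ext v w
  simp only [tensorPow, Matrix.of_apply, Matrix.mul_apply]
  rw [Finset.prod_univ_sum, Fintype.piFinset_univ]
  simp only [Finset.prod_mul_distrib]

lemma tensorPow_conjTranspose (A : Matrix κ κ ℂ) (n : ℕ) :
    tensorPow Aᴴ n = (tensorPow A n)ᴴ := by
  ext v w
  simp [tensorPow, Matrix.conjTranspose_apply]

lemma tensorPow_diagonal (d : κ → ℂ) (n : ℕ) :
    tensorPow (diagonal d) n = diagonal (fun v => ∏ i, d (v i)) := by
  ext v w
  simp only [tensorPow, Matrix.of_apply]
  by_cases h : v = w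
  · subst h; simp
  · rw [Matrix.diagonal_apply_ne _ h]
    obtain ⟨i, hi⟩ := Function.ne_iff.mp h
    exact Finset.prod_eq_zero (Finset.mem_univ i) (Matrix.diagonal_apply_ne _ hi)

lemma tensorPow_one (n : ℕ) : tensorPow (1 : Matrix κ κ ℂ) n = 1 := by
  rw [← Matrix.diagonal_one, tensorPow_diagonal]
  simp

lemma spectral (A : Matrix κ κ ℂ) (hA : A.IsHermitian) :
    A = (hA.eigenvectorUnitary : Matrix κ κ ℂ) * diagonal (fun i => (hA.eigenvalues i : ℂ)) *
      (hA.eigenvectorUnitary : Matrix κ κ ℂ)ᴴ := by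
  conv_lhs => rw [hA.spectral_theorem, Unitary.conjStarAlgAut_apply]
  rfl

lemma unitary_eq (A : Matrix κ κ ℂ) (hA : A.IsHermitian) :
    (hA.eigenvectorUnitary : Matrix κ κ ℂ)ᴴ * (hA.eigenvectorUnitary : Matrix κ κ ℂ) = 1 :=
  Unitary.coe_star_mul_self hA.eigenvectorUnitary

lemma rpowH_eq (A : Matrix κ κ ℂ) (hA : A.IsHermitian) (p : ℝ) :
    A.rpowH p = (hA.eigenvectorUnitary : Matrix κ κ ℂ) *
      diagonal (fun i => ((hA.eigenvalues i ^ p : ℝ) : ℂ)) *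
      (hA.eigenvectorUnitary : Matrix κ κ ℂ)ᴴ := by
  rw [Matrix.rpowH, dif_pos hA]; rfl

lemma rpowH_herm (A : Matrix κ κ ℂ) (hA : A.IsHermitian) (p : ℝ) : (A.rpowH p)ᴴ = A.rpowH p := by
  rw [rpowH_eq A hA]
  simp only [Matrix.conjTranspose_mul, Matrix.conjTranspose_conjTranspose,
    Matrix.diagonal_conjTranspose, Matrix.mul_assoc]
  congr 3
  funext i
  simp

lemma retr_rpowH (A : Matrix κ κ ℂ) (hA : A.IsHermitian) (p : ℝ) :
    retr (A.rpowH p) = ∑ i, hA.eigenvalues i ^ p := by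
  rw [retr, rpowH_eq A hA, Matrix.trace_mul_comm, ← Matrix.mul_assoc, unitary_eq, Matrix.one_mul,
    Matrix.trace_diagonal, Complex.re_sum]
  simp only [Complex.ofReal_re]

lemma rpowH_proj (ρ σ : Matrix κ κ ℂ) (hρ : ρ.IsHermitian) (hσ : σ.PosSemidef)
    (hsupp : ∀ v : κ → ℂ, σ.mulVec v = 0 → ρ.mulVec v = 0) (p : ℝ) (hp : p ≠ 0) :
    σ.rpowH p * (σ.rpowH (-p) * ρ * σ.rpowH (-p)) * σ.rpowH p = ρ := by
  set V : Matrix κ κ ℂ := (hσ.1.eigenvectorUnitary : Matrix κ κ ℂ) with hVdef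
  have hV : Vᴴ * V = 1 := unitary_eq σ hσ.1
  have hV' : V * Vᴴ = 1 := mul_eq_one_comm.mp hV
  set P := σ.rpowH (-p) * σ.rpowH p with hP
  have mulform : ∀ c d : κ → ℂ, (V * diagonal c * Vᴴ) * (V * diagonal d * Vᴴ) =
      V * diagonal (fun i => c i * d i) * Vᴴ := by
    intro c d
    rw [← Matrix.diagonal_mul_diagonal]
    calc _ = V * diagonal c * (Vᴴ * V) * diagonal d * Vᴴ := by simp only [Matrix.mul_assoc]
      _ = _ := by rw [hV]; simp only [Matrix.mul_assoc, Matrix.one_mul]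
  have hσP : σ * P = σ := by
    have e := spectral σ hσ.1
    refine (congrArg (· * P) e).trans (Eq.trans ?_ e.symm)
    simp only [hP]
    rw [rpowH_eq σ hσ.1, rpowH_eq σ hσ.1]
    rw [← hVdef, mulform, mulform]
    congr 3
    funext i
    have hi := hσ.eigenvalues_nonneg i
    rcases hi.eq_or_lt with h | h
    · rw [← h]; simp
    · rw [← Complex.ofReal_mul, ← Real.rpow_add h]; simp
  have hρP : ρ * P = ρ := by
    have h0 : ρ * (P - 1) = 0 := by
      apply Matrix.ext_of_mulVec_single
      intro i
      rw [← Matrix.mulVec_mulVec, Matrix.zero_mulVec]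
      apply hsupp
      rw [Matrix.mulVec_mulVec, Matrix.mul_sub, hσP, Matrix.mul_one, sub_self, Matrix.zero_mulVec]
    rw [Matrix.mul_sub, Matrix.mul_one, sub_eq_zero] at h0
    exact h0
  have hPρ : σ.rpowH p * σ.rpowH (-p) * ρ = ρ := by
    have := congrArg Matrix.conjTranspose hρP
    rwa [hP, Matrix.conjTranspose_mul, Matrix.conjTranspose_mul, rpowH_herm σ hσ.1,
      rpowH_herm σ hσ.1, hρ.eq] at this
  calc _ = σ.rpowH p * σ.rpowH (-p) * ρ * P := by rw [hP]; simp only [Matrix.mul_assoc]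
    _ = _ := by rw [hPρ, hρP]

lemma tensorPow_spectral (A U : Matrix κ κ ℂ) (x : κ → ℝ) (n : ℕ)
    (h : A = U * diagonal (fun i => (x i : ℂ)) * Uᴴ) :
    tensorPow A n = tensorPow U n * diagonal (fun v => ((∏ i, x (v i) : ℝ) : ℂ)) *
      (tensorPow U n)ᴴ := by
  rw [h, tensorPow_mul, tensorPow_mul, tensorPow_diagonal, tensorPow_conjTranspose]
  simp only [Complex.ofReal_prod]

lemma tensorPow_unitary (U : Matrix κ κ ℂ) (hU : Uᴴ * U = 1) (n : ℕ) :
    (tensorPow U n)ᴴ * tensorPow U n = 1 := by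
  rw [← tensorPow_conjTranspose, ← tensorPow_mul, hU, tensorPow_one]

lemma retr_le_one (ρ : Matrix κ κ ℂ) (hρ : ρ.PosSemidef) (hρtr : ρ.trace = 1) (n : ℕ)
    (T : Matrix (Fin n → κ) (Fin n → κ) ℂ) (hT : T.PosSemidef) (hT1 : (1 - T).PosSemidef) :
    retr (tensorPow ρ n * T) ≤ 1 := by
  set x := hρ.1.eigenvalues with hx
  have hx0 : ∀ i, 0 ≤ x i := hρ.eigenvalues_nonneg
  set U := tensorPow (hρ.1.eigenvectorUnitary : Matrix κ κ ℂ) n with hUdef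
  have hU : Uᴴ * U = 1 := tensorPow_unitary _ (unitary_eq ρ hρ.1) n
  have hs := tensorPow_spectral ρ _ x n (spectral ρ hρ.1)
  rw [← hUdef] at hs
  have key := bound_one Uᴴ T (by rwa [Matrix.conjTranspose_conjTranspose]) hT hT1
    (fun v => ((∏ i, x (v i) : ℝ) : ℂ)) (fun _ => 1) (by simp)
  have hsum : ∑ v : Fin n → κ, ‖((∏ i, x (v i) : ℝ) : ℂ)‖ = 1 := by
    have : ∑ i, x i = 1 := by
      have := hρ.1.trace_eq_sum_eigenvalues
      rw [hρtr] at this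
      have h2 := congrArg Complex.re this
      simpa using h2.symm
    have h3 := Fintype.sum_pow x n
    rw [this, one_pow] at h3
    rw [h3]
    refine Finset.sum_congr rfl fun v _ => ?_
    rw [Complex.norm_real, Real.norm_of_nonneg (Finset.prod_nonneg fun i _ => hx0 _)]
  rw [hsum] at key
  refine le_trans ?_ key
  refine le_trans (le_of_eq ?_) (Complex.re_le_norm _)
  unfold retr
  congr 1
  have hd : (diagonal (fun _ => 1) : Matrix (Fin n → κ) (Fin n → κ) ℂ) = 1 := Matrix.diagonal_one
  rw [hd, hs, Matrix.mul_one, Matrix.mul_one, Matrix.conjTranspose_conjTranspose]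
  simp only [Matrix.mul_assoc]
  rw [Matrix.trace_mul_comm]
  simp only [Matrix.mul_assoc]

lemma main_bound (ρ σ : Matrix κ κ ℂ) (hρ : ρ.PosSemidef) (hσ : σ.PosSemidef)
    (hsupp : ∀ v : κ → ℂ, σ.mulVec v = 0 → ρ.mulVec v = 0) (n : ℕ)
    (T : Matrix (Fin n → κ) (Fin n → κ) ℂ)
    (hT : T.PosSemidef) (hT1 : (1 - T).PosSemidef) (α : ℝ) (hα : 1 < α) :
    retr (tensorPow ρ n * T) ≤ retr (tensorPow σ n * T) ^ (1 - 1 / α) *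
      (retr (Matrix.rpowH (Matrix.rpowH σ ((1 - α) / (2 * α)) * ρ *
        Matrix.rpowH σ ((1 - α) / (2 * α))) α) ^ n) ^ (1 / α) := by
  have hp : (1 - α) / (2 * α) = -((α - 1) / (2 * α)) := by ring
  have hp0 : (α - 1) / (2 * α) ≠ 0 := by
    have : 0 < α - 1 := by linarith
    positivity
  rw [hp]
  set p := (α - 1) / (2 * α) with hpdef
  set X := σ.rpowH (-p) * ρ * σ.rpowH (-p) with hX
  have hXp : X.PosSemidef := by
    have := hρ.mul_mul_conjTranspose_same (σ.rpowH (-p))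
    rwa [rpowH_herm σ hσ.1] at this
  have hdec : tensorPow ρ n = tensorPow (σ.rpowH p) n * tensorPow X n * tensorPow (σ.rpowH p) n := by
    rw [← tensorPow_mul, ← tensorPow_mul, rpowH_proj ρ σ hρ.1 hσ hsupp p hp0]
  have hSn := tensorPow_spectral (σ.rpowH p) _ (fun i => hσ.1.eigenvalues i ^ p) n
    (rpowH_eq σ hσ.1 p)
  have hsn := tensorPow_spectral σ _ _ n (spectral σ hσ.1)
  have hXn := tensorPow_spectral X _ _ n (spectral X hXp.1)
  have key := three_lines' (tensorPow (hXp.1.eigenvectorUnitary : Matrix κ κ ℂ) n)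
    (tensorPow (hσ.1.eigenvectorUnitary : Matrix κ κ ℂ) n) T
    (tensorPow_unitary _ (unitary_eq X hXp.1) n) (tensorPow_unitary _ (unitary_eq σ hσ.1) n)
    hT hT1 (fun v => ∏ i, hXp.1.eigenvalues (v i)) (fun v => ∏ i, hσ.1.eigenvalues (v i))
    (fun v => Finset.prod_nonneg fun i _ => hXp.eigenvalues_nonneg _)
    (fun v => Finset.prod_nonneg fun i _ => hσ.eigenvalues_nonneg _) α hα
    (tensorPow (σ.rpowH p) n) (by
      rw [hSn]
      congr 3
      funext v
      rw [Real.finsetProd_rpow _ _ (fun i _ => hσ.eigenvalues_nonneg _)])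
  rw [← hsn, ← hXn, ← hdec] at key
  rw [retr_rpowH X hXp.1, Fintype.sum_pow]
  refine key.trans (le_of_eq ?_)
  congr 2
  refine Finset.sum_congr rfl fun v _ => ?_
  rw [Real.finsetProd_rpow _ _ (fun i _ => hXp.eigenvalues_nonneg _)]

end Helpers

/-- strong converse exponent lower bound for quantum hypothesis
testing with product states. For density operators `ρ, σ` with `supp ρ ⊆ supp σ`,
`r > 0`, `n ≥ 1`, and any test `0 ≤ Tⁿ ≤ 𝟙` on the `n`-fold tensor power with
`Tr[ρ^{⊗n} Tⁿ] > 0` and `-(1/n) log Tr[σ^{⊗n} Tⁿ] ≥ r`: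
`-(1/n) log Tr[ρ^{⊗n} Tⁿ] ≥ sup_{α>1} ((α-1)/α)(r - D_α^*(ρ‖σ))`. -/
theorem strong_converse_exponent_product
    {ι : Type*} [Fintype ι] [DecidableEq ι]
    (ρ σ : Matrix ι ι ℂ)
    (hρ : ρ.PosSemidef) (hρtr : ρ.trace = 1)
    (hσ : σ.PosSemidef) (hσtr : σ.trace = 1)
    (hsupp : ∀ v : ι → ℂ, σ.mulVec v = 0 → ρ.mulVec v = 0)
    (r : ℝ) (hr : 0 < r) (n : ℕ) (hn : 1 ≤ n)
    (T : Matrix (Fin n → ι) (Fin n → ι) ℂ)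
    (hT : T.PosSemidef) (hT1 : (1 - T).PosSemidef)
    (hTρ : 0 < retr (tensorPow ρ n * T))
    (hTσ : r ≤ -(1 / (n : ℝ)) * Real.log (retr (tensorPow σ n * T))) :
    (⨆ (α : ℝ) (_ : 1 < α), (α - 1) / α * (r - sandwichedRenyiDiv α ρ σ)) ≤
      -(1 / (n : ℝ)) * Real.log (retr (tensorPow ρ n * T)) := by
  have hn0 : (0 : ℝ) < n := by exact_mod_cast hn
  have hnonneg : 0 ≤ -(1 / (n : ℝ)) * Real.log (retr (tensorPow ρ n * T)) := by
    have h1 := Real.log_nonpos hTρ.le (retr_le_one ρ hρ hρtr n T hT hT1)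
    have h2 : 0 < 1 / (n : ℝ) := by positivity
    nlinarith
  refine Real.iSup_le (fun α => Real.iSup_le (fun hα => ?_) hnonneg) hnonneg
  have hα0 : 0 < α := by linarith
  have key := main_bound ρ σ hρ hσ hsupp n T hT hT1 α hα
  unfold sandwichedRenyiDiv
  set Q := retr (Matrix.rpowH (Matrix.rpowH σ ((1 - α) / (2 * α)) * ρ *
        Matrix.rpowH σ ((1 - α) / (2 * α))) α) with hQ
  set A := retr (tensorPow ρ n * T)
  set B := retr (tensorPow σ n * T)
  have hpos := lt_of_lt_of_le hTρ key
  have hQ0 : 0 ≤ Q := by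
    have hXp : (Matrix.rpowH σ ((1 - α) / (2 * α)) * ρ *
        Matrix.rpowH σ ((1 - α) / (2 * α))).PosSemidef := by
      have := hρ.mul_mul_conjTranspose_same (σ.rpowH ((1 - α) / (2 * α)))
      rwa [rpowH_herm σ hσ.1] at this
    rw [hQ, retr_rpowH _ hXp.1]
    exact Finset.sum_nonneg fun i _ => Real.rpow_nonneg (hXp.eigenvalues_nonneg i) _
  have hQn : 0 ≤ (Q ^ n) ^ (1 / α) := Real.rpow_nonneg (pow_nonneg hQ0 n) _
  have hB1 : 0 < B ^ (1 - 1 / α) := pos_of_mul_pos_left hpos hQn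
  have hQ1 : 0 < (Q ^ n) ^ (1 / α) := pos_of_mul_pos_right hpos hB1.le
  have hQpos : 0 < Q := by
    rcases hQ0.eq_or_lt with h | h
    · rw [← h, zero_pow (by omega), Real.zero_rpow (by positivity)] at hQ1
      exact absurd hQ1 (lt_irrefl _)
    · exact h
  have hBnn : 0 ≤ B := by
    obtain ⟨R, hR⟩ := exists_root T hT
    have hσn : (tensorPow σ n).PosSemidef := by
      obtain ⟨S, hS⟩ := exists_root σ hσ
      rw [hS, tensorPow_mul, tensorPow_conjTranspose]
      exact Matrix.posSemidef_conjTranspose_mul_self _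
    have h1 := (hσn.mul_mul_conjTranspose_same R).trace_nonneg
    have h2 : (tensorPow σ n * T).trace = (R * tensorPow σ n * Rᴴ).trace := by
      rw [hR, ← Matrix.mul_assoc, Matrix.trace_mul_comm, ← Matrix.mul_assoc]
    show 0 ≤ (tensorPow σ n * T).trace.re
    rw [h2]
    exact (Complex.le_def.mp h1).1
  have hBpos : 0 < B := by
    rcases hBnn.eq_or_lt with h | h
    · rw [← h] at hTσ
      simp at hTσ
      linarith
    · exact h
  have hlog := Real.log_le_log hTρ key
  rw [Real.log_mul hB1.ne' hQ1.ne', Real.log_rpow hBpos, Real.log_rpow (pow_pos hQpos n),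
    Real.log_pow] at hlog
  have hα1 : 0 < α - 1 := by linarith
  have hc : 0 < (α - 1) / α := by positivity
  have h3 : (α - 1) / α * (r - (α - 1)⁻¹ * Real.log Q) =
      (α - 1) / α * r - 1 / α * Real.log Q := by
    field_simp
  have h4 := mul_le_mul_of_nonneg_left hTσ hc.le
  have h5 : (1 / (n : ℝ)) * Real.log A ≤
      (1 / (n : ℝ)) * ((1 - 1 / α) * Real.log B + 1 / α * (n * Real.log Q)) :=
    mul_le_mul_of_nonneg_left hlog (by positivity)
  have h6 : (1 / (n : ℝ)) * ((1 - 1 / α) * Real.log B + 1 / α * (n * Real.log Q)) =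
      (α - 1) / α * ((1 / (n : ℝ)) * Real.log B) + 1 / α * Real.log Q := by
    field_simp
  rw [h3]
  rw [h6] at h5
  nlinarith

end
end

section
/- Let ρ be a density operator and σ a positive definite density operator on a finite-dimensional complex Hilbert space, let α > 1, and let T be a positive semidefinite operator. Then (Tr[(T^{α/2} ρ^α T^{α/2})^{1/α}])^α ≤ Tr[ρ^α σ^{1−α}] · (Tr[(T^{α/2} σ^{α−1} T^{α/2})^{1/(α−1)}])^{α−1}. -/
open Matrix
open scoped ComplexOrder Kronecker

noncomputable section

/-- The operator absolute value `|A| = (A† A)^(1/2)`. -/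
def Matrix.absM {ι : Type*} [Fintype ι] [DecidableEq ι] (A : Matrix ι ι ℂ) :
    Matrix ι ι ℂ :=
  Matrix.rpowH (Aᴴ * A) (2⁻¹ : ℝ)

namespace PetzHolder

variable {ι : Type*} [Fintype ι] [DecidableEq ι]

lemma rpowH_eq {A : Matrix ι ι ℂ} (hA : A.IsHermitian) (p : ℝ) :
    Matrix.rpowH A p = (hA.eigenvectorUnitary : Matrix ι ι ℂ) *
      Matrix.diagonal (fun i => ((hA.eigenvalues i ^ p : ℝ) : ℂ)) *
      star (hA.eigenvectorUnitary : Matrix ι ι ℂ) := by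
  simp [Matrix.rpowH, hA]

lemma star_mul_U {A : Matrix ι ι ℂ} (hA : A.IsHermitian) :
    star (hA.eigenvectorUnitary : Matrix ι ι ℂ) * (hA.eigenvectorUnitary : Matrix ι ι ℂ) = 1 :=
  Unitary.coe_star_mul_self _

lemma U_mul_star {A : Matrix ι ι ℂ} (hA : A.IsHermitian) :
    (hA.eigenvectorUnitary : Matrix ι ι ℂ) * star (hA.eigenvectorUnitary : Matrix ι ι ℂ) = 1 :=
  Unitary.coe_mul_star_self _

lemma rpowH_mul {A : Matrix ι ι ℂ} (hA : A.IsHermitian) (p q : ℝ) :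
    Matrix.rpowH A p * Matrix.rpowH A q = (hA.eigenvectorUnitary : Matrix ι ι ℂ) *
      Matrix.diagonal (fun i => ((hA.eigenvalues i ^ p * hA.eigenvalues i ^ q : ℝ) : ℂ)) *
      star (hA.eigenvectorUnitary : Matrix ι ι ℂ) := by
  rw [rpowH_eq hA, rpowH_eq hA]
  set U := (hA.eigenvectorUnitary : Matrix ι ι ℂ)
  have h : star U * U = 1 := star_mul_U hA
  calc _ = U * Matrix.diagonal (fun i => ((hA.eigenvalues i ^ p : ℝ) : ℂ)) * (star U * U) *
        Matrix.diagonal (fun i => ((hA.eigenvalues i ^ q : ℝ) : ℂ)) * star U := by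
        simp only [Matrix.mul_assoc]
    _ = _ := by
        rw [h, Matrix.mul_one, Matrix.mul_assoc U, Matrix.diagonal_mul_diagonal]
        simp only [Complex.ofReal_mul]

lemma rpowH_one {A : Matrix ι ι ℂ} (hA : A.IsHermitian) : Matrix.rpowH A 1 = A := by
  rw [rpowH_eq hA]
  conv_rhs => rw [hA.spectral_theorem]
  simp [Unitary.conjStarAlgAut_apply, Function.comp_def]

lemma rpowH_isHermitian {A : Matrix ι ι ℂ} (hA : A.IsHermitian) (p : ℝ) :
    (Matrix.rpowH A p).IsHermitian := by
  rw [rpowH_eq hA, Matrix.star_eq_conjTranspose]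
  apply Matrix.isHermitian_mul_mul_conjTranspose
  exact Matrix.isHermitian_diagonal_of_self_adjoint _ (by
    ext i; simp)

lemma rpowH_posSemidef {A : Matrix ι ι ℂ} (hA : A.PosSemidef) (p : ℝ) :
    (Matrix.rpowH A p).PosSemidef := by
  rw [rpowH_eq hA.1, Matrix.star_eq_conjTranspose]
  apply Matrix.PosSemidef.mul_mul_conjTranspose_same
  refine Matrix.PosSemidef.diagonal fun i => ?_
  have := Real.rpow_nonneg (hA.eigenvalues_nonneg i) p
  simpa using this

lemma rpowH_add {A : Matrix ι ι ℂ} (hA : A.PosDef) (p q : ℝ) :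
    Matrix.rpowH A p * Matrix.rpowH A q = Matrix.rpowH A (p + q) := by
  rw [rpowH_mul hA.1, rpowH_eq hA.1]
  simp only [Real.rpow_add (hA.eigenvalues_pos _)]

lemma rpowH_zero {A : Matrix ι ι ℂ} (hA : A.IsHermitian) : Matrix.rpowH A 0 = 1 := by
  rw [rpowH_eq hA]
  simp [U_mul_star hA]

lemma pinv {A : Matrix ι ι ℂ} (hA : A.IsHermitian) :
    Matrix.rpowH A (-1) * A * Matrix.rpowH A (-1) = Matrix.rpowH A (-1) := by
  conv_lhs => rw [← rpowH_one hA]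
  simp only [rpowH_one hA]
  have h1 : Matrix.rpowH A (-1) * A = Matrix.rpowH A (-1) * Matrix.rpowH A 1 := by
    rw [rpowH_one hA]
  rw [h1, rpowH_mul hA, rpowH_eq hA]
  set U := (hA.eigenvectorUnitary : Matrix ι ι ℂ)
  have h : star U * U = 1 := star_mul_U hA
  calc _ = U * Matrix.diagonal (fun i => ((hA.eigenvalues i ^ (-1 : ℝ) *
          hA.eigenvalues i ^ (1 : ℝ) : ℝ) : ℂ)) * (star U * U) *
        Matrix.diagonal (fun i => ((hA.eigenvalues i ^ (-1 : ℝ) : ℝ) : ℂ)) * star U := by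
        simp only [Matrix.mul_assoc]
    _ = _ := by
        rw [h, Matrix.mul_one, Matrix.mul_assoc U, Matrix.diagonal_mul_diagonal]
        congr 3
        ext i
        rw [← Complex.ofReal_mul]
        congr 1
        rw [Real.rpow_neg_one, Real.rpow_one]
        by_cases h0 : hA.eigenvalues i = 0
        · simp [h0]
        · field_simp

/-- overlap matrix -/
def ov {A B : Matrix ι ι ℂ} (hA : A.IsHermitian) (hB : B.IsHermitian) : Matrix ι ι ℂ :=
  star (hA.eigenvectorUnitary : Matrix ι ι ℂ) * (hB.eigenvectorUnitary : Matrix ι ι ℂ)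

lemma retr_mul {A B : Matrix ι ι ℂ} (hA : A.IsHermitian) (hB : B.IsHermitian) (p q : ℝ) :
    retr (Matrix.rpowH A p * Matrix.rpowH B q) =
      ∑ i, ∑ j, Complex.normSq (ov hA hB i j) * (hA.eigenvalues i ^ p * hB.eigenvalues j ^ q) := by
  rw [rpowH_eq hA, rpowH_eq hB]
  have hs : star (ov hA hB) = star (hB.eigenvectorUnitary : Matrix ι ι ℂ) *
      (hA.eigenvectorUnitary : Matrix ι ι ℂ) := by simp [ov]
  have ht : ((hA.eigenvectorUnitary : Matrix ι ι ℂ) *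
      Matrix.diagonal (fun i => ((hA.eigenvalues i ^ p : ℝ) : ℂ)) *
      star (hA.eigenvectorUnitary : Matrix ι ι ℂ) * ((hB.eigenvectorUnitary : Matrix ι ι ℂ) *
      Matrix.diagonal (fun i => ((hB.eigenvalues i ^ q : ℝ) : ℂ)) *
      star (hB.eigenvectorUnitary : Matrix ι ι ℂ))).trace =
      (Matrix.diagonal (fun i => ((hA.eigenvalues i ^ p : ℝ) : ℂ)) * ov hA hB *
        Matrix.diagonal (fun i => ((hB.eigenvalues i ^ q : ℝ) : ℂ)) * star (ov hA hB)).trace := by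
    rw [hs, ov]
    simp only [Matrix.mul_assoc]
    rw [Matrix.trace_mul_comm]
    simp only [Matrix.mul_assoc]
  rw [retr, ht, Matrix.trace, Complex.re_sum]
  refine Finset.sum_congr rfl fun i _ => ?_
  rw [Matrix.diag_apply, Matrix.mul_apply, Complex.re_sum]
  refine Finset.sum_congr rfl fun j _ => ?_
  rw [Matrix.mul_diagonal, Matrix.diagonal_mul, Matrix.star_apply, Complex.normSq_apply]
  simp
  ring

lemma retr_left {A B : Matrix ι ι ℂ} (hA : A.IsHermitian) (hB : B.IsHermitian) (p : ℝ) :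
    retr (Matrix.rpowH A p) =
      ∑ i, ∑ j, Complex.normSq (ov hA hB i j) * hA.eigenvalues i ^ p := by
  have := retr_mul hA hB p 0
  rw [rpowH_zero hB] at this
  simpa using this

lemma retr_right {A B : Matrix ι ι ℂ} (hA : A.IsHermitian) (hB : B.IsHermitian) (p : ℝ) :
    retr (Matrix.rpowH B p) =
      ∑ i, ∑ j, Complex.normSq (ov hA hB i j) * hB.eigenvalues j ^ p := by
  have := retr_mul hA hB 0 p
  rw [rpowH_zero hA] at this
  simpa using this

lemma ov_zero {A B : Matrix ι ι ℂ} (hA : A.IsHermitian) (hB : B.IsHermitian)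
    (hker : ∀ v : ι → ℂ, B *ᵥ v = 0 → A *ᵥ v = 0) (i j : ι) (hj : hB.eigenvalues j = 0) :
    ov hA hB i j = 0 ∨ hA.eigenvalues i = 0 := by
  set U := (hA.eigenvectorUnitary : Matrix ι ι ℂ)
  set V := (hB.eigenvectorUnitary : Matrix ι ι ℂ)
  have h1 : B *ᵥ (fun k => V k j) = 0 := by
    have := hB.mulVec_eigenvectorBasis j
    rw [hj, zero_smul] at this
    exact this
  have h2 := hker _ h1
  have hA1 : star U * A = Matrix.diagonal (fun i => (hA.eigenvalues i : ℂ)) * star U := by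
    have h := rpowH_eq hA 1
    rw [rpowH_one hA] at h
    have hu : star U * U = 1 := star_mul_U hA
    calc star U * A = star U * (U * Matrix.diagonal (fun i => ((hA.eigenvalues i ^ (1:ℝ) : ℝ) : ℂ))
          * star U) := by rw [← h]
      _ = (star U * U) * Matrix.diagonal (fun i => ((hA.eigenvalues i ^ (1:ℝ) : ℝ) : ℂ))
          * star U := by simp only [Matrix.mul_assoc]
      _ = _ := by rw [hu]; simp
  have h3 : (star U * A * V) i j = 0 := by
    rw [Matrix.mul_assoc, Matrix.mul_apply]
    refine Finset.sum_eq_zero fun k _ => ?_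
    have : (A * V) k j = 0 := by
      have := congrFun h2 k
      simpa [Matrix.mulVec, dotProduct, Matrix.mul_apply] using this
    rw [this, mul_zero]
  rw [hA1, Matrix.mul_assoc, Matrix.diagonal_mul, mul_eq_zero] at h3
  rcases h3 with h | h
  · right; exact_mod_cast h
  · left; exact h

lemma main {Z W : Matrix ι ι ℂ} (hZ : Z.PosSemidef) (hW : W.PosSemidef)
    (hker : ∀ v : ι → ℂ, W *ᵥ v = 0 → Z *ᵥ v = 0) (α : ℝ) (hα : 1 < α) :
    (retr (Matrix.rpowH Z α⁻¹)) ^ α ≤ retr (Z * Matrix.rpowH W (-1)) *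
      (retr (Matrix.rpowH W (α - 1)⁻¹)) ^ (α - 1) := by
  have e1 := retr_left hZ.1 hW.1 α⁻¹
  have e2 := retr_mul hZ.1 hW.1 1 (-1)
  have e3 := retr_right hZ.1 hW.1 (α - 1)⁻¹
  have hov := ov_zero hZ.1 hW.1 hker
  rw [rpowH_one hZ.1] at e2
  rw [e1, e2, e3]
  simp only [← Finset.sum_product']
  generalize ov hZ.1 hW.1 = V at *
  have hz := hZ.eigenvalues_nonneg
  have hw := hW.eigenvalues_nonneg
  generalize hZ.1.eigenvalues = z at *
  generalize hW.1.eigenvalues = w at *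
  have hα0 : 0 < α := by linarith
  have hα1 : 0 < α - 1 := by linarith
  have hconj : α.HolderConjugate (α / (α - 1)) := Real.HolderConjugate.conjExponent hα
  set f : ι × ι → ℝ := fun x => Complex.normSq (V x.1 x.2) * (z x.1 ^ (1:ℝ) * w x.2 ^ (-1:ℝ))
    with hf
  set g : ι × ι → ℝ := fun x => Complex.normSq (V x.1 x.2) * w x.2 ^ (α - 1)⁻¹ with hg
  have hf0 : ∀ x, 0 ≤ f x := fun x => mul_nonneg (Complex.normSq_nonneg _)
    (mul_nonneg (Real.rpow_nonneg (hz _) _) (Real.rpow_nonneg (hw _) _))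
  have hg0 : ∀ x, 0 ≤ g x := fun x => mul_nonneg (Complex.normSq_nonneg _)
    (Real.rpow_nonneg (hw _) _)
  have key := Real.inner_le_Lp_mul_Lq_of_nonneg (Finset.univ ×ˢ Finset.univ : Finset (ι × ι)) hconj
    (f := fun x => f x ^ α⁻¹) (g := fun x => g x ^ ((α - 1) / α))
    (fun x _ => Real.rpow_nonneg (hf0 x) _) (fun x _ => Real.rpow_nonneg (hg0 x) _)
  have k1 : ∀ x, (f x ^ α⁻¹) ^ α = f x := fun x => by
    rw [← Real.rpow_mul (hf0 x), inv_mul_cancel₀ hα0.ne', Real.rpow_one]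
  have k2 : ∀ x, (g x ^ ((α - 1) / α)) ^ (α / (α - 1)) = g x := fun x => by
    rw [← Real.rpow_mul (hg0 x)]
    have : (α - 1) / α * (α / (α - 1)) = 1 := by field_simp
    rw [this, Real.rpow_one]
  simp only [k1, k2] at key
  have k3 : ∀ x : ι × ι, f x ^ α⁻¹ * g x ^ ((α - 1) / α) =
      Complex.normSq (V x.1 x.2) * z x.1 ^ α⁻¹ := by
    intro x
    have hp := Complex.normSq_nonneg (V x.1 x.2)
    have hne : α⁻¹ ≠ 0 := inv_ne_zero hα0.ne'
    have hne2 : (α - 1) / α ≠ 0 := (div_pos hα1 hα0).ne'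
    rcases (hw x.2).eq_or_lt with h0 | h0
    · rcases hov x.1 x.2 h0.symm with h | h
      · simp [hf, hg, h, Real.zero_rpow hne]
      · simp [hf, hg, h, Real.zero_rpow hne]
    · rcases hp.eq_or_lt with h1 | h1
      · simp only [hf, hg, ← h1]
        simp [Real.zero_rpow hne]
      · simp only [hf, hg]
        rw [Real.mul_rpow hp (by have := hz x.1; positivity), Real.mul_rpow hp (by positivity),
          Real.rpow_one, Real.mul_rpow (hz _) (by positivity), ← Real.rpow_mul h0.le,
          ← Real.rpow_mul h0.le]
        have a1 : Complex.normSq (V x.1 x.2) ^ α⁻¹ * Complex.normSq (V x.1 x.2) ^ ((α - 1) / α)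
            = Complex.normSq (V x.1 x.2) := by
          rw [← Real.rpow_add h1]
          have : α⁻¹ + (α - 1) / α = 1 := by field_simp; ring
          rw [this, Real.rpow_one]
        have a2 : w x.2 ^ (-1 * α⁻¹) * w x.2 ^ ((α - 1)⁻¹ * ((α - 1) / α)) = 1 := by
          rw [← Real.rpow_add h0]
          have : -1 * α⁻¹ + (α - 1)⁻¹ * ((α - 1) / α) = 0 := by field_simp; ring
          rw [this, Real.rpow_zero]
        linear_combination (z x.1 ^ α⁻¹ * (w x.2 ^ (-1 * α⁻¹) *
          w x.2 ^ ((α - 1)⁻¹ * ((α - 1) / α)))) * a1 +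
          Complex.normSq (V x.1 x.2) * z x.1 ^ α⁻¹ * a2
  simp only [k3] at key
  have hF : 0 ≤ ∑ x ∈ (Finset.univ ×ˢ Finset.univ : Finset (ι × ι)), f x :=
    Finset.sum_nonneg fun x _ => hf0 x
  have hG : 0 ≤ ∑ x ∈ (Finset.univ ×ˢ Finset.univ : Finset (ι × ι)), g x :=
    Finset.sum_nonneg fun x _ => hg0 x
  have hL : 0 ≤ ∑ x ∈ (Finset.univ ×ˢ Finset.univ : Finset (ι × ι)),
      Complex.normSq (V x.1 x.2) * z x.1 ^ α⁻¹ :=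
    Finset.sum_nonneg fun x _ => mul_nonneg (Complex.normSq_nonneg _) (Real.rpow_nonneg (hz _) _)
  have fin := Real.rpow_le_rpow hL key hα0.le
  rw [Real.mul_rpow (Real.rpow_nonneg hF _) (Real.rpow_nonneg hG _), ← Real.rpow_mul hF,
    ← Real.rpow_mul hG] at fin
  have b1 : 1 / α * α = 1 := by field_simp
  have b2 : 1 / (α / (α - 1)) * α = α - 1 := by field_simp
  rw [b1, b2, Real.rpow_one] at fin
  exact fin

end PetzHolder

/-- Hölder-type inequality underlying the Petz–Rényi variational
expression. For a density operator `ρ`, a positive definite density operator `σ`,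
`α > 1`, and a positive semidefinite `T`:
`(Tr[(T^{α/2} ρ^α T^{α/2})^{1/α}])^α
  ≤ Tr[ρ^α σ^{1-α}] · (Tr[(T^{α/2} σ^{α-1} T^{α/2})^{1/(α-1)}])^{α-1}`. -/
theorem petz_holder_inequality
    {ι : Type*} [Fintype ι] [DecidableEq ι]
    (ρ σ : Matrix ι ι ℂ)
    (hρ : ρ.PosSemidef) (hρtr : ρ.trace = 1)
    (hσ : σ.PosDef) (hσtr : σ.trace = 1)
    (α : ℝ) (hα : 1 < α)
    (T : Matrix ι ι ℂ) (hT : T.PosSemidef) :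
    (retr (Matrix.rpowH
        (Matrix.rpowH T (α / 2) * Matrix.rpowH ρ α * Matrix.rpowH T (α / 2)) α⁻¹)) ^ α ≤
      retr (Matrix.rpowH ρ α * Matrix.rpowH σ (1 - α)) *
        (retr (Matrix.rpowH
          (Matrix.rpowH T (α / 2) * Matrix.rpowH σ (α - 1) * Matrix.rpowH T (α / 2))
          (α - 1)⁻¹)) ^ (α - 1) := by
  set S := Matrix.rpowH T (α / 2) with hS
  set R := Matrix.rpowH ρ α with hR
  set L := Matrix.rpowH σ ((α - 1) / 2) with hL
  set L' := Matrix.rpowH σ (-((α - 1) / 2)) with hL'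
  have hK : Matrix.rpowH σ (α - 1) = L * L := by
    rw [hL, PetzHolder.rpowH_add hσ]; congr 1; ring
  have hK' : Matrix.rpowH σ (1 - α) = L' * L' := by
    rw [hL', PetzHolder.rpowH_add hσ]; congr 1; ring
  have hLL : L' * L = 1 := by
    rw [hL, hL', PetzHolder.rpowH_add hσ, neg_add_cancel, PetzHolder.rpowH_zero hσ.1]
  have hLL2 : L * L' = 1 := by
    rw [hL, hL', PetzHolder.rpowH_add hσ, add_neg_cancel, PetzHolder.rpowH_zero hσ.1]
  have hSh : Sᴴ = S := PetzHolder.rpowH_isHermitian hT.1 _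
  have hLh : Lᴴ = L := PetzHolder.rpowH_isHermitian hσ.1 _
  have hLh' : L'ᴴ = L' := PetzHolder.rpowH_isHermitian hσ.1 _
  have hRp : R.PosSemidef := PetzHolder.rpowH_posSemidef hρ _
  rw [hK, hK']
  have hZ : (S * R * S).PosSemidef := by
    have := hRp.mul_mul_conjTranspose_same S
    rwa [hSh] at this
  have hWe : S * (L * L) * S = (L * S)ᴴ * (L * S) := by
    rw [Matrix.conjTranspose_mul, hSh, hLh]; simp only [Matrix.mul_assoc]
  have hW : (S * (L * L) * S).PosSemidef := by
    rw [hWe]; exact Matrix.posSemidef_conjTranspose_mul_self _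
  have hker : ∀ v : ι → ℂ, (S * (L * L) * S) *ᵥ v = 0 → (S * R * S) *ᵥ v = 0 := by
    intro v hv
    rw [hWe, Matrix.conjTranspose_mul_self_mulVec_eq_zero] at hv
    have h1 : S *ᵥ v = 0 := by
      have : S = L' * (L * S) := by rw [← Matrix.mul_assoc, hLL, Matrix.one_mul]
      rw [this, ← Matrix.mulVec_mulVec, hv, Matrix.mulVec_zero]
    rw [← Matrix.mulVec_mulVec, h1, Matrix.mulVec_zero]
  have main := PetzHolder.main hZ hW hker α hα
  have hpinv := PetzHolder.pinv hW.1
  have hPh : (Matrix.rpowH (S * (L * L) * S) (-1))ᴴ = _ :=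
    PetzHolder.rpowH_isHermitian hW.1 (-1)
  have hPp := PetzHolder.rpowH_posSemidef hW ((α - 1)⁻¹)
  refine main.trans (mul_le_mul_of_nonneg_right ?_ (Real.rpow_nonneg ?_ _))
  swap
  · exact (Complex.le_def.1 hPp.trace_nonneg).1
  generalize Matrix.rpowH (S * (L * L) * S) (-1) = P at *
  have hQ2 : (L * S * P * S * L) * (L * S * P * S * L) = L * S * P * S * L := by
    calc _ = L * S * (P * (S * (L * L) * S) * P) * S * L := by simp only [Matrix.mul_assoc]
      _ = _ := by rw [hpinv]
  have hQh : (L * S * P * S * L)ᴴ = L * S * P * S * L := by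
    simp only [Matrix.conjTranspose_mul, hSh, hLh, hPh, Matrix.mul_assoc]
  have hQs : L' * (L * S * P * S * L) * L' = S * P * S := by
    calc _ = (L' * L) * S * P * S * (L * L') := by simp only [Matrix.mul_assoc]
      _ = _ := by rw [hLL, hLL2, Matrix.one_mul, Matrix.mul_one]
  generalize L * S * P * S * L = Q at *
  have hC : ((1 - Q) * L')ᴴ * ((1 - Q) * L') = L' * L' - S * P * S := by
    rw [Matrix.conjTranspose_mul, Matrix.conjTranspose_sub, hQh, hLh', Matrix.conjTranspose_one]
    calc _ = L' * ((1 - Q) * (1 - Q)) * L' := by simp only [Matrix.mul_assoc]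
      _ = L' * (1 - Q) * L' := by
        congr 2
        rw [sub_mul, one_mul, mul_sub, hQ2, mul_one, sub_self, sub_zero]
      _ = _ := by rw [mul_sub, sub_mul, hQs, Matrix.mul_one]
  have hpos := (hRp.mul_mul_conjTranspose_same ((1 - Q) * L')).trace_nonneg
  rw [Matrix.trace_mul_comm, ← Matrix.mul_assoc, hC, Matrix.trace_mul_comm, mul_sub,
    Matrix.trace_sub] at hpos
  have h5 : (S * R * S * P).trace = (R * (S * P * S)).trace := by
    rw [Matrix.mul_assoc S, Matrix.mul_assoc S, Matrix.trace_mul_comm]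
    simp only [Matrix.mul_assoc]
  have h6 := (Complex.le_def.1 hpos).1
  rw [Complex.sub_re, Complex.zero_re] at h6
  rw [retr, retr, h5]
  linarith


end
end
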